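/- arXiv:2011.01610 — 3 statements merged into one kernel-verified Lean document; each statement's English description precedes it below -/
import Mathlib

section
/- Let I = (i₋, i₊) ⊆ ℝ be an open interval, P a smooth nonnegative function on I, and Q a smooth strictly increasing function on I with lim_{x→i₋} Q(x) < 0 and lim_{x→i₊} Q(x) > 0. Let f_∞ be a probability density on I satisfying the stationary equation d/dx (P(x) f_∞(x)) + Q(x) f_∞(x) = 0 for all x ∈ I, and set w(x) = P(x)/Q'(x). Then for every random variable X with density f_∞ and every smooth function φ on I such that φ(X) has finite variance, Var[φ(X)] ≤ E[w(X) (φ'(X))²], i.e. ∫_I φ²(x) f_∞(x) dx − (∫_I φ(x) f_∞(x) dx)² ≤ ∫_I w(x) (φ'(x))² f_∞(x) dx. -/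
open MeasureTheory Set Filter

/-!
Let `F = P f` be the flux, so that `F' = -Q f`, let `a` be the zero of `Q` and put `u = φ - φ a`.
Completing the square gives the pointwise inequality

  `(F u² / Q)' = -f u² + F (u'² / Q' - (u' - u Q' / Q)² / Q') ≤ -f u² + F u'² / Q'`,

and integrating it bounds `∫ u² f ≥ Var φ` by `∫ (P / Q') u'² f`. The singularity at `a` is avoided
by differentiating `F u² / (Q + t)` instead and letting `t → 0`, through positive values to the
right of `a` and through negative values to its left: as `u a = 0`, the boundary terms then have the
favourable sign.

Since `P / Q'` is read as `0` at the zeros of `Q'`, the inequality needs `F u' = 0` there.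
This holds because `Q'` vanishes at least linearly at its zeros, so that `F u'² / Q'` could not be
integrable otherwise.
-/

section Zeros

open scoped Topology

lemma not_integrableAtFilter_inv_nhdsGT {q : ℝ → ℝ} {e : ℝ}
    (hq : DifferentiableWithinAt ℝ q (Ioi e) e) (he : q e = 0) (hne : ∀ᶠ x in 𝓝[>] e, q x ≠ 0) :
    ¬ IntegrableAtFilter (fun x => (q x)⁻¹) (𝓝[>] e) := by
  intro hint
  have hlinear : q =O[𝓝[>] e] fun x => x - e := by
    simpa [he] using hq.isBigO_sub
  have hinv : (fun x => (x - e)⁻¹) =O[𝓝[>] e] fun x => (q x)⁻¹ :=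
    hlinear.inv_rev (hne.mono fun x hx h => absurd h hx)
  have hmeas : StronglyMeasurable fun x : ℝ => (x - e)⁻¹ := by fun_prop
  obtain ⟨s, hs, hints⟩ :=
    hinv.integrableAtFilter hmeas.stronglyMeasurableAtFilter hint
  obtain ⟨d, hed, hd⟩ := mem_nhdsGT_iff_exists_Ioc_subset.1 hs
  have hinterval : IntervalIntegrable (fun x => (x - e)⁻¹) volume e d :=
    (intervalIntegrable_iff_integrableOn_Ioc_of_le (le_of_lt hed)).2 (hints.mono_set hd)
  rcases intervalIntegrable_sub_inv_iff.1 hinterval with h | h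
  · exact (ne_of_lt hed) h
  · exact h left_mem_uIcc

lemma not_integrableOn_inv_of_eq_zero_of_ne_zero {q : ℝ → ℝ} {z c : ℝ} (hzc : z ≤ c)
    (hq : DifferentiableOn ℝ q (Icc z c)) (hz : q z = 0) (hc : q c ≠ 0) :
    ¬ IntegrableOn (fun x => (q x)⁻¹) (Icc z c) := by
  intro hint
  have hcompact : IsCompact (Icc z c ∩ q ⁻¹' {0}) :=
    isCompact_Icc.of_isClosed_subset
      (hq.continuousOn.preimage_isClosed_of_isClosed isClosed_Icc isClosed_singleton)
      inter_subset_left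
  obtain ⟨e, ⟨⟨hze, hec⟩, hqe⟩, hlast⟩ := hcompact.exists_isGreatest ⟨z, ⟨le_rfl, hzc⟩, hz⟩
  have hec : e < c := hec.lt_of_ne (by rintro rfl; exact hc hqe)
  have hsub : Icc e c ⊆ Icc z c := Icc_subset_Icc_left hze
  have hIoc : Ioc e c ∈ 𝓝[>] e := Ioc_mem_nhdsGT hec
  have hdiff : DifferentiableWithinAt ℝ q (Ioi e) e :=
    ((hq e ⟨hze, hec.le⟩).mono (Ioc_subset_Icc_self.trans hsub)).mono_of_mem_nhdsWithin hIoc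
  refine not_integrableAtFilter_inv_nhdsGT hdiff hqe ?_
    ⟨Ioc e c, hIoc, hint.mono_set (Ioc_subset_Icc_self.trans hsub)⟩
  filter_upwards [hIoc] with x hx h
  exact (hlast ⟨hsub (Ioc_subset_Icc_self hx), h⟩).not_gt hx.1

lemma exists_mem_Ioo_deriv_pos_of_strictMonoOn {Q : ℝ → ℝ} {z d : ℝ} (hzd : z < d)
    (hQ : DifferentiableOn ℝ Q (Icc z d)) (hmono : StrictMonoOn Q (Icc z d)) :
    ∃ c ∈ Ioo z d, 0 < deriv Q c := by
  obtain ⟨c, hc, hslope⟩ :=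
    exists_deriv_eq_slope Q hzd hQ.continuousOn (hQ.mono Ioo_subset_Icc_self)
  refine ⟨c, hc, hslope ▸ div_pos (sub_pos.2 ?_) (sub_pos.2 hzd)⟩
  exact hmono (left_mem_Icc.2 hzd.le) (right_mem_Icc.2 hzd.le) hzd

lemma eq_zero_of_integrableOn_div_deriv {I : Set ℝ} {Q h : ℝ → ℝ} (hI : IsOpen I)
    (hQ : DifferentiableOn ℝ Q I) (hQ' : DifferentiableOn ℝ (deriv Q) I) (hmono : StrictMonoOn Q I)
    (hh : ContinuousOn h I) (hint : IntegrableOn (fun x => h x / deriv Q x) I)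
    {z : ℝ} (hz : z ∈ I) (hQz : deriv Q z = 0) : h z = 0 := by
  by_contra hne
  have hnhds : {x | x ∈ I ∧ h x ≠ 0} ∈ 𝓝 z :=
    inter_mem (hI.mem_nhds hz) ((hh.continuousAt (hI.mem_nhds hz)).eventually_ne hne)
  obtain ⟨d, hzd, hd⟩ := mem_nhdsGE_iff_exists_Icc_subset.1 (mem_nhdsWithin_of_mem_nhds hnhds)
  have hdI : Icc z d ⊆ I := fun x hx => (hd hx).1
  obtain ⟨c, ⟨hzc, hcd⟩, hc⟩ :=
    exists_mem_Ioo_deriv_pos_of_strictMonoOn hzd (hQ.mono hdI) (hmono.mono hdI)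
  have hcI : Icc z c ⊆ I := (Icc_subset_Icc_right hcd.le).trans hdI
  have hh0 : ∀ x ∈ Icc z c, h x ≠ 0 := fun x hx => (hd (Icc_subset_Icc_right hcd.le hx)).2
  have hcancel : EqOn (fun x => h x / deriv Q x * (h x)⁻¹) (fun x => (deriv Q x)⁻¹) (Icc z c) := by
    intro x hx
    have := hh0 x hx
    simp only
    field_simp
  exact not_integrableOn_inv_of_eq_zero_of_ne_zero hzc.le (hQ'.mono hcI) hQz hc.ne'
    (((hint.mono_set hcI).mul_continuousOn ((hh.mono hcI).inv₀ hh0) isCompact_Icc).congr_fun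
      hcancel measurableSet_Icc)

end Zeros

section Limits

open scoped Topology

lemma tendsto_integral_div_add_mul {α : Type*} [MeasurableSpace α] {μ : Measure α}
    {Q g : α → ℝ} {l : Filter ℝ} [l.IsCountablyGenerated] (hl : l ≤ 𝓝 0)
    (hQ : AEStronglyMeasurable Q μ) (hg : Integrable g μ) (hQ0 : ∀ᵐ x ∂μ, Q x ≠ 0)
    (hsign : ∀ᶠ t in l, ∀ᵐ x ∂μ, 0 ≤ Q x * t) :
    Tendsto (fun t => ∫ x, Q x / (Q x + t) * g x ∂μ) l (𝓝 (∫ x, g x ∂μ)) := by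
  refine tendsto_integral_filter_of_dominated_convergence (fun x => |g x|) ?_ ?_ hg.abs ?_
  · exact .of_forall fun t =>
      (hQ.aemeasurable.div (hQ.aemeasurable.add_const t)).aestronglyMeasurable.mul
        hg.aestronglyMeasurable
  · filter_upwards [hsign] with t ht
    filter_upwards [ht] with x hx
    have hle : |Q x| ≤ |Q x + t| := sq_le_sq.1 (by nlinarith)
    rw [norm_mul, norm_div]
    exact mul_le_of_le_one_left (norm_nonneg _) (div_le_one_of_le₀ hle (norm_nonneg _))
  · filter_upwards [hQ0] with x hx
    have hadd : Tendsto (fun t => Q x + t) l (𝓝 (Q x)) := by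
      simpa using (tendsto_const_nhds (x := Q x)).add (tendsto_id.mono_left hl)
    simpa [hx] using ((tendsto_const_nhds (x := Q x)).div hadd hx).mul_const (g x)

lemma integrableOn_and_setIntegral_le_of_intervalIntegral_le {I : Set ℝ} [I.OrdConnected]
    {g : ℝ → ℝ} {a C : ℝ} (ha : a ∈ I) (hg : ∀ x ∈ I, 0 ≤ g x)
    (hint : ∀ c ∈ I, ∀ d ∈ I, IntegrableOn g (Icc c d))
    (hle : ∀ c ∈ I, ∀ d ∈ I, c ≤ a → a ≤ d → ∫ x in c..d, g x ≤ C) :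
    IntegrableOn g I ∧ ∫ x in I, g x ≤ C := by
  have hI : MeasurableSet I := OrdConnected.measurableSet ‹I.OrdConnected›
  have : Nonempty I := ⟨⟨a, ha⟩⟩
  let l : Filter (I × I) := atBot ×ˢ atTop
  have hcover : AECover (volume.restrict I) l fun p => Icc (p.1 : ℝ) p.2 := by
    refine ⟨ae_restrict_of_forall_mem hI fun x hx => ?_, fun _ => measurableSet_Icc⟩
    exact (eventually_le_atBot (⟨x, hx⟩ : I)).prod_mk (eventually_ge_atTop (⟨x, hx⟩ : I))
  have hsub : ∀ p : I × I, (volume.restrict I).restrict (Icc (p.1 : ℝ) p.2) =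
      volume.restrict (Icc (p.1 : ℝ) p.2) := fun p =>
    Measure.restrict_restrict_of_subset (Set.Icc_subset I p.1.2 p.2.2)
  have hbound : ∀ᶠ p in l, ∫ x in Icc (p.1 : ℝ) p.2, g x ∂volume.restrict I ≤ C := by
    filter_upwards [(eventually_le_atBot (⟨a, ha⟩ : I)).prod_mk
      (eventually_ge_atTop (⟨a, ha⟩ : I))] with p hp
    have hca : (p.1 : ℝ) ≤ a := hp.1
    have had : a ≤ (p.2 : ℝ) := hp.2
    rw [hsub, integral_Icc_eq_integral_Ioc, ← intervalIntegral.integral_of_le (hca.trans had)]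
    exact hle _ p.1.2 _ p.2.2 hca had
  have hgI : IntegrableOn g I :=
    hcover.integrable_of_integral_bounded_of_nonneg_ae C
      (fun p => by rw [IntegrableOn, hsub]; exact hint _ p.1.2 _ p.2.2)
      (ae_restrict_of_forall_mem hI hg) hbound
  exact ⟨hgI, le_of_tendsto (hcover.integral_tendsto_of_countably_generated hgI) hbound⟩

end Limits

section CompletedSquare

open scoped Topology

lemma quotient_rule_le_sub_of_nonneg {F Q q f u p s : ℝ} (hF : 0 ≤ F) (hq : 0 ≤ q) (hs : s ≠ 0)
    (hzero : q = 0 → F * p = 0) :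
    ((-(Q * f) * u ^ 2 + F * (2 * u * p)) * s - F * u ^ 2 * q) / s ^ 2
      ≤ F * p ^ 2 / q - Q / s * (u ^ 2 * f) := by
  have hsquare : F * (2 * u * p) / s ≤ F * u ^ 2 * q / s ^ 2 + F * p ^ 2 / q := by
    rcases hq.eq_or_lt with rfl | hq
    · rw [show F * (2 * u * p) = 2 * u * (F * p) by ring, hzero rfl]
      simp
    · rw [← sub_nonneg]
      calc 0 ≤ F * (u * q / s - p) ^ 2 / q := by positivity
        _ = _ := by field_simp; ring
  calc _ = F * (2 * u * p) / s - F * u ^ 2 * q / s ^ 2 - Q / s * (u ^ 2 * f) := by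
        field_simp; ring
    _ ≤ _ := by linarith

lemma integrableOn_Icc_sq_mul {I : Set ℝ} {c d : ℝ} {f u : ℝ → ℝ} (hI : Icc c d ⊆ I)
    (hf : IntegrableOn f I) (hu : ContinuousOn u I) :
    IntegrableOn (fun x => u x ^ 2 * f x) (Icc c d) :=
  (hf.mono_set hI).continuousOn_mul ((hu.mono hI).pow 2) isCompact_Icc

variable {I : Set ℝ} {c d : ℝ} {F Q q f u p : ℝ → ℝ}
  (hF0 : ∀ x ∈ I, 0 ≤ F x)
  (hF : ∀ x ∈ I, HasDerivAt F (-(Q x * f x)) x)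
  (hQ : ∀ x ∈ I, HasDerivAt Q (q x) x)
  (hq : ∀ x ∈ I, 0 ≤ q x)
  (hu : ∀ x ∈ I, HasDerivAt u (p x) x)
  (hzero : ∀ x ∈ I, q x = 0 → F x * p x = 0)
  (hf : IntegrableOn f I)
  (hint : IntegrableOn (fun x => F x * p x ^ 2 / q x) I)

include hF0 hF hQ hq hu hzero hf hint

lemma intervalIntegral_div_add_mul_le (hcd : c ≤ d) (hI : Icc c d ⊆ I) {t : ℝ}
    (ht : ∀ x ∈ Icc c d, Q x + t ≠ 0)
    (hboundary : F c * u c ^ 2 / (Q c + t) ≤ F d * u d ^ 2 / (Q d + t)) :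
    ∫ x in c..d, Q x / (Q x + t) * (u x ^ 2 * f x) ≤ ∫ x in c..d, F x * p x ^ 2 / q x := by
  have hQcont : ContinuousOn Q (Icc c d) := (HasDerivAt.continuousOn hQ).mono hI
  have hleft : IntegrableOn (fun x => Q x / (Q x + t) * (u x ^ 2 * f x)) (Icc c d) :=
    (integrableOn_Icc_sq_mul hI hf (HasDerivAt.continuousOn hu)).continuousOn_mul
      (hQcont.div (hQcont.add_const t) ht) isCompact_Icc
  have hright := hint.mono_set hI
  have hderiv : ∀ x ∈ Icc c d, HasDerivAt (fun x => F x * u x ^ 2 / (Q x + t))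
      (((-(Q x * f x) * u x ^ 2 + F x * (2 * u x * p x)) * (Q x + t) - F x * u x ^ 2 * q x)
        / (Q x + t) ^ 2) x := fun x hx => by
    refine (((hF x (hI hx)).mul ((hu x (hI hx)).pow 2)).div
      ((hQ x (hI hx)).add_const t) (ht x hx)).congr_deriv ?_
    simp
  have hftc := intervalIntegral.sub_le_integral_of_hasDeriv_right_of_le hcd
    (HasDerivAt.continuousOn hderiv)
    (fun x hx => (hderiv x (Ioo_subset_Icc_self hx)).hasDerivWithinAt) (hright.sub hleft)
    fun x hx => have hx := Ioo_subset_Icc_self hx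
      quotient_rule_le_sub_of_nonneg (hF0 x (hI hx)) (hq x (hI hx)) (ht x hx) (hzero x (hI hx))
  simp only [Pi.sub_apply] at hftc
  rw [← intervalIntegrable_iff_integrableOn_Icc_of_le hcd] at hleft hright
  rw [intervalIntegral.integral_sub hright hleft] at hftc
  linarith

lemma intervalIntegral_sq_mul_le_of_eventually (hcd : c ≤ d) (hI : Icc c d ⊆ I)
    {l : Filter ℝ} [l.NeBot] [l.IsCountablyGenerated]
    (hl : l ≤ 𝓝 0) (hQ0 : ∀ x ∈ Ioo c d, Q x ≠ 0)
    (hsign : ∀ᶠ t in l, ∀ x ∈ Icc c d, Q x + t ≠ 0 ∧ 0 ≤ Q x * t)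
    (hboundary : ∀ᶠ t in l, F c * u c ^ 2 / (Q c + t) ≤ F d * u d ^ 2 / (Q d + t)) :
    ∫ x in c..d, u x ^ 2 * f x ≤ ∫ x in c..d, F x * p x ^ 2 / q x := by
  have hlim : Tendsto (fun t => ∫ x in c..d, Q x / (Q x + t) * (u x ^ 2 * f x)) l
      (𝓝 (∫ x in c..d, u x ^ 2 * f x)) := by
    simp only [intervalIntegral.integral_of_le hcd, integral_Ioc_eq_integral_Ioo]
    have hQcont : ContinuousOn Q (Ioo c d) :=
      (HasDerivAt.continuousOn hQ).mono (Ioo_subset_Icc_self.trans hI)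
    refine tendsto_integral_div_add_mul hl (hQcont.aestronglyMeasurable measurableSet_Ioo)
      ((integrableOn_Icc_sq_mul hI hf (HasDerivAt.continuousOn hu)).mono_set Ioo_subset_Icc_self)
      (ae_restrict_of_forall_mem measurableSet_Ioo hQ0) ?_
    filter_upwards [hsign] with t ht
    exact ae_restrict_of_forall_mem measurableSet_Ioo fun x hx => (ht x (Ioo_subset_Icc_self hx)).2
  refine le_of_tendsto hlim ?_
  filter_upwards [hsign, hboundary] with t ht
  exact intervalIntegral_div_add_mul_le hF0 hF hQ hq hu hzero hf hint hcd hI fun x hx => (ht x hx).1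

lemma intervalIntegral_sq_mul_le_of_left_eq_zero (hcd : c ≤ d) (hI : Icc c d ⊆ I)
    (hmono : StrictMonoOn Q (Icc c d)) (hQc : Q c = 0) (huc : u c = 0) :
    ∫ x in c..d, u x ^ 2 * f x ≤ ∫ x in c..d, F x * p x ^ 2 / q x := by
  have hc := left_mem_Icc.2 hcd
  have hd := right_mem_Icc.2 hcd
  have hQnonneg : ∀ x ∈ Icc c d, 0 ≤ Q x := fun x hx => hQc ▸ hmono.monotoneOn hc hx hx.1
  have hQpos : ∀ x ∈ Ioo c d, 0 < Q x := fun x hx => hQc ▸ hmono hc (Ioo_subset_Icc_self hx) hx.1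
  refine intervalIntegral_sq_mul_le_of_eventually hF0 hF hQ hq hu hzero hf hint hcd hI
    (l := 𝓝[>] 0) nhdsWithin_le_nhds (fun x hx => (hQpos x hx).ne') ?_ ?_
  · filter_upwards [self_mem_nhdsWithin] with t (ht : 0 < t) x hx
    have := hQnonneg x hx
    constructor <;> positivity
  · filter_upwards [self_mem_nhdsWithin] with t (ht : 0 < t)
    calc F c * u c ^ 2 / (Q c + t) = 0 := by simp [huc]
      _ ≤ _ := div_nonneg (mul_nonneg (hF0 d (hI hd)) (sq_nonneg _))
        (add_nonneg (hQnonneg d hd) ht.le)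

lemma intervalIntegral_sq_mul_le_of_right_eq_zero (hcd : c ≤ d) (hI : Icc c d ⊆ I)
    (hmono : StrictMonoOn Q (Icc c d)) (hQd : Q d = 0) (hud : u d = 0) :
    ∫ x in c..d, u x ^ 2 * f x ≤ ∫ x in c..d, F x * p x ^ 2 / q x := by
  have hc := left_mem_Icc.2 hcd
  have hd := right_mem_Icc.2 hcd
  have hQnonpos : ∀ x ∈ Icc c d, Q x ≤ 0 := fun x hx => hQd ▸ hmono.monotoneOn hx hd hx.2
  have hQneg : ∀ x ∈ Ioo c d, Q x < 0 := fun x hx => hQd ▸ hmono (Ioo_subset_Icc_self hx) hd hx.2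
  refine intervalIntegral_sq_mul_le_of_eventually hF0 hF hQ hq hu hzero hf hint hcd hI
    (l := 𝓝[<] 0) nhdsWithin_le_nhds (fun x hx => (hQneg x hx).ne) ?_ ?_
  · filter_upwards [self_mem_nhdsWithin] with t (ht : t < 0) x hx
    have := hQnonpos x hx
    exact ⟨by linarith, mul_nonneg_of_nonpos_of_nonpos this ht.le⟩
  · filter_upwards [self_mem_nhdsWithin] with t (ht : t < 0)
    calc F c * u c ^ 2 / (Q c + t) ≤ 0 :=
        div_nonpos_of_nonneg_of_nonpos (mul_nonneg (hF0 c (hI hc)) (sq_nonneg _))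
          (add_nonpos (hQnonpos c hc) ht.le)
      _ = _ := by simp [hud]

lemma intervalIntegral_sq_mul_le_setIntegral [I.OrdConnected] (hmono : StrictMonoOn Q I) {a : ℝ}
    (hc : c ∈ I) (ha : a ∈ I) (hd : d ∈ I) (hca : c ≤ a) (had : a ≤ d)
    (hQa : Q a = 0) (hua : u a = 0) :
    ∫ x in c..d, u x ^ 2 * f x ≤ ∫ x in I, F x * p x ^ 2 / q x := by
  have hnonneg : ∀ x ∈ I, 0 ≤ F x * p x ^ 2 / q x := fun x hx =>
    div_nonneg (mul_nonneg (hF0 x hx) (sq_nonneg _)) (hq x hx)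
  have hcaI : Icc c a ⊆ I := Set.Icc_subset I hc ha
  have hadI : Icc a d ⊆ I := Set.Icc_subset I ha hd
  have hleft := intervalIntegral_sq_mul_le_of_right_eq_zero hF0 hF hQ hq hu hzero hf hint
    hca hcaI (hmono.mono hcaI) hQa hua
  have hright := intervalIntegral_sq_mul_le_of_left_eq_zero hF0 hF hQ hq hu hzero hf hint
    had hadI (hmono.mono hadI) hQa hua
  have hucont : ContinuousOn u I := HasDerivAt.continuousOn hu
  calc ∫ x in c..d, u x ^ 2 * f x
      = (∫ x in c..a, u x ^ 2 * f x) + ∫ x in a..d, u x ^ 2 * f x :=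
        (intervalIntegral.integral_add_adjacent_intervals
          ((intervalIntegrable_iff_integrableOn_Icc_of_le hca).2
            (integrableOn_Icc_sq_mul hcaI hf hucont))
          ((intervalIntegrable_iff_integrableOn_Icc_of_le had).2
            (integrableOn_Icc_sq_mul hadI hf hucont))).symm
    _ ≤ (∫ x in c..a, F x * p x ^ 2 / q x) + ∫ x in a..d, F x * p x ^ 2 / q x :=
        add_le_add hleft hright
    _ = ∫ x in c..d, F x * p x ^ 2 / q x :=
        intervalIntegral.integral_add_adjacent_intervals
          ((intervalIntegrable_iff_integrableOn_Icc_of_le hca).2 (hint.mono_set hcaI))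
          ((intervalIntegrable_iff_integrableOn_Icc_of_le had).2 (hint.mono_set hadI))
    _ = ∫ x in Ioc c d, F x * p x ^ 2 / q x := intervalIntegral.integral_of_le (hca.trans had)
    _ ≤ ∫ x in I, F x * p x ^ 2 / q x :=
        setIntegral_mono_set hint
          (ae_restrict_of_forall_mem (OrdConnected.measurableSet ‹I.OrdConnected›) hnonneg)
          (Ioc_subset_Icc_self.trans (Set.Icc_subset I hc hd)).eventuallyLE

end CompletedSquare

section Variance

variable {α : Type*} [MeasurableSpace α] {μ : Measure α} {φ f : α → ℝ}

lemma integrable_mul_of_integrable_sq_mul (hφ : AEStronglyMeasurable φ μ) (hf : Integrable f μ)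
    (hf0 : 0 ≤ᵐ[μ] f) (hφf : Integrable (fun x => φ x ^ 2 * f x) μ) :
    Integrable (fun x => φ x * f x) μ := by
  refine (hφf.add hf).mono' (hφ.mul hf.aestronglyMeasurable) ?_
  filter_upwards [hf0] with x (hx : 0 ≤ f x)
  have hφx : |φ x| ≤ φ x ^ 2 + 1 := by nlinarith [sq_nonneg (|φ x| - 1), sq_abs (φ x)]
  calc ‖φ x * f x‖ = |φ x| * f x := by rw [norm_mul, Real.norm_of_nonneg hx, Real.norm_eq_abs]
    _ ≤ (φ x ^ 2 + 1) * f x := by gcongr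
    _ = φ x ^ 2 * f x + f x := by ring

lemma integrable_sq_mul_and_variance_le (k : ℝ) (hφ : AEStronglyMeasurable φ μ)
    (hf0 : 0 ≤ᵐ[μ] f) (hf1 : ∫ x, f x ∂μ = 1)
    (hφf : Integrable (fun x => (φ x - k) ^ 2 * f x) μ) :
    Integrable (fun x => φ x ^ 2 * f x) μ ∧
      ∫ x, φ x ^ 2 * f x ∂μ - (∫ x, φ x * f x ∂μ) ^ 2 ≤ ∫ x, (φ x - k) ^ 2 * f x ∂μ := by
  have hf : Integrable f μ := .of_integral_ne_zero (by simp [hf1])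
  have hcentred : Integrable (fun x => (φ x - k) * f x) μ :=
    integrable_mul_of_integrable_sq_mul (hφ.sub aestronglyMeasurable_const) hf hf0 hφf
  have hmean : ∫ x, φ x * f x ∂μ = ∫ x, (φ x - k) * f x ∂μ + k := by
    calc ∫ x, φ x * f x ∂μ = ∫ x, ((φ x - k) * f x + k * f x) ∂μ := by congr with x; ring
      _ = _ := by rw [integral_add hcentred (hf.const_mul k), integral_const_mul, hf1, mul_one]
  have hexpand : (fun x => φ x ^ 2 * f x) = fun x =>
      (φ x - k) ^ 2 * f x + (2 * k * ((φ x - k) * f x) + k ^ 2 * f x) := by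
    ext x; ring
  have hrest : Integrable (fun x => 2 * k * ((φ x - k) * f x) + k ^ 2 * f x) μ :=
    (hcentred.const_mul _).add (hf.const_mul _)
  rw [hexpand]
  refine ⟨hφf.add hrest, ?_⟩
  rw [integral_add hφf hrest, integral_add (hcentred.const_mul _) (hf.const_mul _),
    integral_const_mul, integral_const_mul, hf1, hmean]
  nlinarith [sq_nonneg (∫ x, (φ x - k) * f x ∂μ)]

end Variance

lemma integrableOn_sq_mul_and_setIntegral_le {I : Set ℝ} (hI : IsOpen I) [I.OrdConnected]
    {F Q f u : ℝ → ℝ} {a : ℝ} (ha : a ∈ I) (hQa : Q a = 0) (hua : u a = 0)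
    (hQ : DifferentiableOn ℝ Q I) (hQ' : DifferentiableOn ℝ (deriv Q) I) (hmono : StrictMonoOn Q I)
    (hF0 : ∀ x ∈ I, 0 ≤ F x) (hF : ∀ x ∈ I, HasDerivAt F (-(Q x * f x)) x)
    (hf0 : ∀ x ∈ I, 0 ≤ f x) (hf : IntegrableOn f I) (hu : ContDiffOn ℝ 1 u I)
    (hint : IntegrableOn (fun x => F x * deriv u x ^ 2 / deriv Q x) I) :
    IntegrableOn (fun x => u x ^ 2 * f x) I ∧
      ∫ x in I, u x ^ 2 * f x ≤ ∫ x in I, F x * deriv u x ^ 2 / deriv Q x := by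
  have hQderiv : ∀ x ∈ I, HasDerivAt Q (deriv Q x) x := fun x hx =>
    (hQ.differentiableAt (hI.mem_nhds hx)).hasDerivAt
  have huderiv : ∀ x ∈ I, HasDerivAt u (deriv u x) x := fun x hx =>
    ((hu.differentiableOn one_ne_zero).differentiableAt (hI.mem_nhds hx)).hasDerivAt
  have hq0 : ∀ x ∈ I, 0 ≤ deriv Q x := fun x hx => by
    rw [← derivWithin_of_isOpen hI hx]
    exact hmono.monotoneOn.derivWithin_nonneg
  have hFcont : ContinuousOn F I := HasDerivAt.continuousOn hF
  have hcont : ContinuousOn (fun x => F x * deriv u x ^ 2) I :=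
    hFcont.mul ((hu.continuousOn_deriv_of_isOpen hI le_rfl).pow 2)
  have hzero : ∀ x ∈ I, deriv Q x = 0 → F x * deriv u x = 0 := fun x hx hqx => by
    have henergy : F x * deriv u x ^ 2 = 0 :=
      eq_zero_of_integrableOn_div_deriv hI hQ hQ' hmono hcont hint hx hqx
    simpa using henergy
  exact integrableOn_and_setIntegral_le_of_intervalIntegral_le ha
    (fun x hx => mul_nonneg (sq_nonneg _) (hf0 x hx))
    (fun c hc d hd => integrableOn_Icc_sq_mul (Set.Icc_subset I hc hd) hf hu.continuousOn)
    (fun c hc d hd hca had => intervalIntegral_sq_mul_le_setIntegral hF0 hF hQderiv hq0 huderiv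
      hzero hf hint hmono hc ha hd hca had hQa hua)

theorem chernoff_with_weight_general {I : Set ℝ} (hI : IsOpen I) [I.OrdConnected]
    {P Q f φ : ℝ → ℝ} (hQ : DifferentiableOn ℝ Q I) (hQ' : DifferentiableOn ℝ (deriv Q) I)
    (hP0 : ∀ x ∈ I, 0 ≤ P x) (hmono : StrictMonoOn Q I) (hzero : ∃ a ∈ I, Q a = 0)
    (hf0 : ∀ x ∈ I, 0 ≤ f x) (hf1 : ∫ x in I, f x = 1)
    (hstationary : ∀ x ∈ I, HasDerivAt (fun y => P y * f y) (-(Q x * f x)) x)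
    (hφ : ContDiffOn ℝ 1 φ I)
    (hint : IntegrableOn (fun x => P x / deriv Q x * deriv φ x ^ 2 * f x) I) :
    IntegrableOn (fun x => φ x ^ 2 * f x) I ∧
      (∫ x in I, φ x ^ 2 * f x) - (∫ x in I, φ x * f x) ^ 2
        ≤ ∫ x in I, P x / deriv Q x * deriv φ x ^ 2 * f x := by
  obtain ⟨a, ha, hQa⟩ := hzero
  have hflux : (fun x => P x / deriv Q x * deriv φ x ^ 2 * f x) =
      fun x => P x * f x * deriv (fun y => φ y - φ a) x ^ 2 / deriv Q x := by
    ext x; rw [deriv_sub_const]; ring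
  rw [hflux] at hint ⊢
  obtain ⟨hcentred, hle⟩ := integrableOn_sq_mul_and_setIntegral_le hI ha hQa (sub_self (φ a))
    hQ hQ' hmono (fun x hx => mul_nonneg (hP0 x hx) (hf0 x hx)) hstationary hf0
    (.of_integral_ne_zero (by simp [hf1])) (hφ.sub contDiffOn_const) hint
  obtain ⟨hsq, hvar⟩ := integrable_sq_mul_and_variance_le (φ a)
    (hφ.continuousOn.aestronglyMeasurable hI.measurableSet)
    (ae_restrict_of_forall_mem hI.measurableSet hf0) hf1 hcentred
  exact ⟨hsq, hvar.trans hle⟩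

/-- **Chernoff-type inequality with weight** (Theorem 2.1).
Let `I = (ia, ib) ⊆ ℝ` be an open interval (with possibly infinite endpoints),
`P` a smooth nonnegative function on `I`, `Q` a smooth strictly increasing function
on `I` which is negative near `ia` and positive near `ib` (i.e. its limits at the
endpoints satisfy `lim_{x→ia} Q < 0 < lim_{x→ib} Q`; for a strictly increasing `Q`
this is equivalent to `Q` taking a negative and a positive value on `I`).
If `finf` is a probability density on `I` satisfying the stationary Fokker–Planck
equation `(P finf)' + Q finf = 0` on `I`, and `w = P / Q'`, then for every smooth `φ`
such that `φ(X)` has finite variance,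
`Var[φ(X)] ≤ E[w(X) (φ'(X))²]` (whenever the right-hand side is finite). -/
theorem chernoff_with_weight
    (ia ib : EReal) (hii : ia < ib)
    (I : Set ℝ) (hI : I = {x : ℝ | ia < (x : EReal) ∧ (x : EReal) < ib})
    (P Q finf φ : ℝ → ℝ)
    (hPsmooth : ContDiffOn ℝ (⊤ : ℕ∞) P I)
    (hQsmooth : ContDiffOn ℝ (⊤ : ℕ∞) Q I)
    (hPnonneg : ∀ x ∈ I, 0 ≤ P x)
    (hQmono : StrictMonoOn Q I)
    (hQleft : ∃ x ∈ I, Q x < 0)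
    (hQright : ∃ x ∈ I, 0 < Q x)
    (hfinfnonneg : ∀ x ∈ I, 0 ≤ finf x)
    (hfinfprob : ∫ x in I, finf x = 1)
    (hstationary : ∀ x ∈ I, HasDerivAt (fun y => P y * finf y) (-(Q x * finf x)) x)
    (hφsmooth : ContDiffOn ℝ (⊤ : ℕ∞) φ I)
    (hvar : IntegrableOn (fun x => φ x ^ 2 * finf x) I)
    (hrhs : IntegrableOn (fun x => (P x / deriv Q x) * (deriv φ x) ^ 2 * finf x) I) :
    (∫ x in I, φ x ^ 2 * finf x) - (∫ x in I, φ x * finf x) ^ 2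
      ≤ ∫ x in I, (P x / deriv Q x) * (deriv φ x) ^ 2 * finf x := by
  have hIopen : IsOpen I := hI ▸ isOpen_Ioo.preimage continuous_coe_real_ereal
  have : I.OrdConnected :=
    hI ▸ ordConnected_Ioo.preimage_mono (f := ((↑) : ℝ → EReal)) EReal.coe_strictMono.monotone
  have hQ : DifferentiableOn ℝ Q I := hQsmooth.differentiableOn (by simp)
  have hQ' : DifferentiableOn ℝ (deriv Q) I :=
    (hQsmooth.deriv_of_isOpen (m := 1) hIopen (by norm_cast)).differentiableOn one_ne_zero
  obtain ⟨l, hl, hQl⟩ := hQleft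
  obtain ⟨r, hr, hQr⟩ := hQright
  have hzero : ∃ a ∈ I, Q a = 0 :=
    (OrdConnected.isPreconnected ‹I.OrdConnected›).intermediate_value hl hr hQsmooth.continuousOn
      ⟨hQl.le, hQr.le⟩
  exact (chernoff_with_weight_general hIopen hQ hQ' hPnonneg hQmono hzero hfinfnonneg hfinfprob
    hstationary (hφsmooth.of_le (by simp)) hrhs).2
end

section
/- Let κ > 0, m > 0, and let f_{κ,m}(x) = (m^κ/Γ(κ)) x^{−(1+κ)} e^{−m/x} for x ∈ ℝ₊ be the standard inverse Gamma density. Then for every smooth function φ on ℝ₊ such that ∫ φ² f_{κ,m} is finite, ∫_{ℝ₊} φ²(x) f_{κ,m}(x) dx − (∫_{ℝ₊} φ(x) f_{κ,m}(x) dx)² ≤ (1/γ(κ)) ∫_{ℝ₊} x² (φ'(x))² f_{κ,m}(x) dx, where γ(κ) = κ²/4 for 0 < κ ≤ 2 and γ(κ) = κ − 1 for κ > 2. Moreover, for κ > 2 the inequality becomes an equality when φ(x) is linear in x. -/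
open MeasureTheory Set

/-- The standard inverse Gamma density with shape `κ > 0` and scale `m > 0`:
`f_{κ,m}(x) = (m^κ/Γ(κ)) x^{−(1+κ)} e^{−m/x}`, `x ∈ ℝ₊`. -/
noncomputable def stdInvGamma (κ m x : ℝ) : ℝ :=
  m ^ κ / Real.Gamma κ * x ^ (-(1 + κ)) * Real.exp (-m / x)

/-!
Write `f` for the density, fix `0 < a ≤ 1` with `a < κ`, and put `h x = x ^ a - x₀ ^ a` with
`x₀ = m / (κ - a)`. The Pearson equation `(x² f)' = (m - (κ - 1) x) f` yields
`(x² f h')' h ≤ -a (κ - a) f h²`. By Picone's identity, the derivative of `x² f h' ψ² / h` is then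
at most `x² ψ'² f - a (κ - a) ψ² f` for every `ψ`. For `ψ = φ - φ x₀` this quotient extends
continuously by `0` to the common zero `x₀`, and it has the sign of `x - x₀`, so integrating on
both sides of `x₀` leaves boundary terms of the favourable sign:
`a (κ - a) ∫ (φ - φ x₀)² f ≤ ∫ x² φ'² f`. The left-hand side dominates `a (κ - a) Var φ`.
-/

open Filter ProbabilityTheory Topology

theorem integrableOn_Ioi_and_setIntegral_le {g : ℝ → ℝ} {l x₀ C : ℝ} (hx₀ : l < x₀)
    (hg : ∀ x ∈ Ioi l, 0 ≤ g x) (hloc : LocallyIntegrableOn g (Ioi l))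
    (hC : ∀ s t, l < s → s ≤ x₀ → x₀ ≤ t → ∫ x in Icc s t, g x ≤ C) :
    IntegrableOn g (Ioi l) ∧ ∫ x in Ioi l, g x ≤ C := by
  obtain ⟨s, -, hs, hs_lim⟩ := exists_seq_strictAnti_tendsto l
  have hcover : AECover (volume.restrict (Ioi l)) atTop fun n ↦ Icc (s n) (n : ℝ) :=
    (aecover_Ioi_of_Ici hs_lim).inter
      ((aecover_Iic tendsto_natCast_atTop_atTop).mono_ac
        Measure.restrict_le_self.absolutelyContinuous)
  have hsub (n : ℕ) : Icc (s n) (n : ℝ) ⊆ Ioi l := fun x hx ↦ (hs n).trans_le hx.1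
  have hrestrict (n : ℕ) : (volume.restrict (Ioi l)).restrict (Icc (s n) (n : ℝ)) =
      volume.restrict (Icc (s n) (n : ℝ)) := Measure.restrict_restrict_of_subset (hsub n)
  have hbound : ∀ᶠ n : ℕ in atTop,
      ∫ x in Icc (s n) (n : ℝ), g x ∂(volume.restrict (Ioi l)) ≤ C := by
    filter_upwards [hs_lim.eventually_le_const hx₀,
      tendsto_natCast_atTop_atTop.eventually_ge_atTop x₀] with n hsn hn
    rw [hrestrict]
    exact hC _ _ (hs n) hsn hn
  have hint : IntegrableOn g (Ioi l) :=
    hcover.integrable_of_integral_bounded_of_nonneg_ae C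
      (fun n ↦ by
        rw [IntegrableOn, hrestrict]
        exact hloc.integrableOn_compact_subset (hsub n) isCompact_Icc)
      (ae_restrict_of_forall_mem measurableSet_Ioi hg) hbound
  exact ⟨hint, le_of_tendsto (hcover.integral_tendsto_of_countably_generated hint) hbound⟩

/-- A comparison function for the Sturm–Liouville operator `u ↦ -(p u')'` with weight `ρ` on an
interval `S`: an increasing function `h` with derivative `h'`, vanishing at `x₀`, such that
`(p h')' h ≤ -γ ρ h²`. It is used to prove `γ ∫ ρ ψ² ≤ ∫ p ψ'²` for `ψ` vanishing at `x₀`. -/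
structure IsSturmBarrier (p ρ : ℝ → ℝ) (γ : ℝ) (S : Set ℝ) (x₀ : ℝ) (h h' : ℝ → ℝ) : Prop where
  ordConnected : S.OrdConnected
  mem : x₀ ∈ S
  eq_zero : h x₀ = 0
  hasDerivAt : ∀ x ∈ S, HasDerivAt h (h' x) x
  deriv_pos : ∀ x ∈ S, 0 < h' x
  differentiableAt_flux : ∀ x ∈ S, DifferentiableAt ℝ (fun y ↦ p y * h' y) x
  deriv_flux_mul_le : ∀ x ∈ S, deriv (fun y ↦ p y * h' y) x * h x ≤ -(γ * ρ x * h x ^ 2)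
  coeff_nonneg : ∀ x ∈ S, 0 ≤ p x

/-- The quantity `p h' ψ² / h` whose derivative enters Picone's inequality. -/
noncomputable def piconeFlux (p h h' ψ : ℝ → ℝ) (x : ℝ) : ℝ :=
  p x * h' x * ψ x ^ 2 / h x

namespace IsSturmBarrier

variable {p ρ h h' ψ : ℝ → ℝ} {γ x₀ x s t l : ℝ} {S : Set ℝ}

theorem strictMonoOn (hb : IsSturmBarrier p ρ γ S x₀ h h') : StrictMonoOn h S :=
  strictMonoOn_of_deriv_pos hb.ordConnected.convex
    (fun x hx ↦ (hb.hasDerivAt x hx).continuousAt.continuousWithinAt) fun x hx ↦ by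
      rw [(hb.hasDerivAt x (interior_subset hx)).deriv]
      exact hb.deriv_pos x (interior_subset hx)

theorem pos_of_gt (hb : IsSturmBarrier p ρ γ S x₀ h h') (hx : x ∈ S) (hlt : x₀ < x) :
    0 < h x :=
  hb.eq_zero ▸ hb.strictMonoOn hb.mem hx hlt

theorem neg_of_lt (hb : IsSturmBarrier p ρ γ S x₀ h h') (hx : x ∈ S) (hlt : x < x₀) :
    h x < 0 :=
  hb.eq_zero ▸ hb.strictMonoOn hx hb.mem hlt

theorem ne_zero (hb : IsSturmBarrier p ρ γ S x₀ h h') (hx : x ∈ S) (hne : x ≠ x₀) : h x ≠ 0 :=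
  hne.lt_or_gt.elim (fun hlt ↦ (hb.neg_of_lt hx hlt).ne) fun hlt ↦ (hb.pos_of_gt hx hlt).ne'

theorem differentiableAt_piconeFlux (hb : IsSturmBarrier p ρ γ S x₀ h h') (hx : x ∈ S)
    (hne : x ≠ x₀) (hψ : DifferentiableAt ℝ ψ x) :
    DifferentiableAt ℝ (piconeFlux p h h' ψ) x :=
  ((hb.differentiableAt_flux x hx).mul (hψ.pow 2)).div
    (hb.hasDerivAt x hx).differentiableAt (hb.ne_zero hx hne)

theorem deriv_piconeFlux_le (hb : IsSturmBarrier p ρ γ S x₀ h h') (hx : x ∈ S)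
    (hne : x ≠ x₀) (hψ : DifferentiableAt ℝ ψ x) :
    deriv (piconeFlux p h h' ψ) x ≤ p x * deriv ψ x ^ 2 - γ * (ρ x * ψ x ^ 2) := by
  have hh : h x ≠ 0 := hb.ne_zero hx hne
  set q := deriv (fun y ↦ p y * h' y) x with hq
  have hderiv : deriv (piconeFlux p h h' ψ) x =
      p x * deriv ψ x ^ 2 + q * h x * (ψ x / h x) ^ 2
        - p x * (deriv ψ x - h' x * ψ x / h x) ^ 2 := by
    have hquot := (((hb.differentiableAt_flux x hx).hasDerivAt.mul (hψ.hasDerivAt.pow 2)).div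
      (hb.hasDerivAt x hx) hh).deriv
    refine hquot.trans ?_
    simp only [Pi.mul_apply, Pi.pow_apply, ← hq]
    field_simp
    ring
  have hbarrier : q * h x * (ψ x / h x) ^ 2 ≤ -(γ * (ρ x * ψ x ^ 2)) :=
    calc q * h x * (ψ x / h x) ^ 2 ≤ -(γ * ρ x * h x ^ 2) * (ψ x / h x) ^ 2 :=
          mul_le_mul_of_nonneg_right (hb.deriv_flux_mul_le x hx) (sq_nonneg _)
      _ = -(γ * (ρ x * ψ x ^ 2)) := by field_simp
  have hsquare := mul_nonneg (hb.coeff_nonneg x hx) (sq_nonneg (deriv ψ x - h' x * ψ x / h x))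
  linarith

-- At the common zero of `ψ` and `h`, the quotient `ψ / h` has the finite limit `ψ' / h'`.
theorem continuousAt_piconeFlux_self (hb : IsSturmBarrier p ρ γ S x₀ h h')
    (hψ : DifferentiableAt ℝ ψ x₀) (hψ₀ : ψ x₀ = 0) :
    ContinuousAt (piconeFlux p h h' ψ) x₀ := by
  have hslope : Tendsto (fun x ↦ slope ψ x₀ x / slope h x₀ x) (𝓝[≠] x₀)
      (𝓝 (deriv ψ x₀ / h' x₀)) :=
    (hasDerivAt_iff_tendsto_slope.1 hψ.hasDerivAt).div
      (hasDerivAt_iff_tendsto_slope.1 (hb.hasDerivAt x₀ hb.mem)) (hb.deriv_pos x₀ hb.mem).ne'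
  have hfactor : Tendsto (fun x ↦ p x * h' x * ψ x) (𝓝[≠] x₀) (𝓝 0) := by
    have hcont := (hb.differentiableAt_flux x₀ hb.mem).continuousAt.mul hψ.continuousAt
    simpa only [Pi.mul_apply, hψ₀, mul_zero] using! hcont.tendsto.mono_left nhdsWithin_le_nhds
  rw [continuousAt_iff_punctured_nhds]
  have hzero : piconeFlux p h h' ψ x₀ = 0 * (deriv ψ x₀ / h' x₀) := by simp [piconeFlux, hψ₀]
  rw [hzero]
  refine (hfactor.mul hslope).congr' ?_
  filter_upwards [self_mem_nhdsWithin] with x hx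
  rw [slope_def_field, slope_def_field, hψ₀, hb.eq_zero, sub_zero, sub_zero,
    div_div_div_cancel_right₀ (sub_ne_zero.2 hx), piconeFlux]
  ring

theorem continuousAt_piconeFlux (hb : IsSturmBarrier p ρ γ S x₀ h h') (hx : x ∈ S)
    (hψ : DifferentiableAt ℝ ψ x) (hψ₀ : ψ x₀ = 0) :
    ContinuousAt (piconeFlux p h h' ψ) x := by
  obtain rfl | hne := eq_or_ne x x₀
  · exact hb.continuousAt_piconeFlux_self hψ hψ₀
  · exact (hb.differentiableAt_piconeFlux hx hne hψ).continuousAt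

theorem piconeFlux_nonneg (hb : IsSturmBarrier p ρ γ S x₀ h h') (hx : x ∈ S) (hle : x₀ ≤ x) :
    0 ≤ piconeFlux p h h' ψ x :=
  div_nonneg (mul_nonneg (mul_nonneg (hb.coeff_nonneg x hx) (hb.deriv_pos x hx).le) (sq_nonneg _))
    (hb.eq_zero ▸ hb.strictMonoOn.monotoneOn hb.mem hx hle)

theorem piconeFlux_nonpos (hb : IsSturmBarrier p ρ γ S x₀ h h') (hx : x ∈ S) (hle : x ≤ x₀) :
    piconeFlux p h h' ψ x ≤ 0 :=
  div_nonpos_of_nonneg_of_nonpos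
    (mul_nonneg (mul_nonneg (hb.coeff_nonneg x hx) (hb.deriv_pos x hx).le) (sq_nonneg _))
    (hb.eq_zero ▸ hb.strictMonoOn.monotoneOn hx hb.mem hle)

theorem piconeFlux_sub_le_integral (hb : IsSturmBarrier p ρ γ S x₀ h h') (hst : s ≤ t)
    (hS : Icc s t ⊆ S) (hx₀ : x₀ ∉ Ioo s t) (hψ : ∀ x ∈ Icc s t, DifferentiableAt ℝ ψ x)
    (hψ₀ : ψ x₀ = 0)
    (hint : IntegrableOn (fun x ↦ p x * deriv ψ x ^ 2 - γ * (ρ x * ψ x ^ 2)) (Icc s t)) :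
    piconeFlux p h h' ψ t - piconeFlux p h h' ψ s ≤
      ∫ x in s..t, (p x * deriv ψ x ^ 2 - γ * (ρ x * ψ x ^ 2)) := by
  have hne {x : ℝ} (hx : x ∈ Ioo s t) : x ≠ x₀ := fun h ↦ hx₀ (h ▸ hx)
  have hmem {x : ℝ} (hx : x ∈ Ioo s t) : x ∈ Icc s t := Ioo_subset_Icc_self hx
  exact intervalIntegral.sub_le_integral_of_hasDeriv_right_of_le hst
    (fun x hx ↦ (hb.continuousAt_piconeFlux (hS hx) (hψ x hx) hψ₀).continuousWithinAt)
    (fun x hx ↦ (hb.differentiableAt_piconeFlux (hS (hmem hx)) (hne hx)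
      (hψ x (hmem hx))).hasDerivAt.hasDerivWithinAt) hint
    fun x hx ↦ hb.deriv_piconeFlux_le (hS (hmem hx)) (hne hx) (hψ x (hmem hx))

theorem mul_setIntegral_Icc_le (hb : IsSturmBarrier p ρ γ S x₀ h h') (hs : s ≤ x₀) (ht : x₀ ≤ t)
    (hS : Icc s t ⊆ S) (hψ : ∀ x ∈ Icc s t, DifferentiableAt ℝ ψ x) (hψ₀ : ψ x₀ = 0)
    (hmass : IntegrableOn (fun x ↦ ρ x * ψ x ^ 2) (Icc s t))
    (henergy : IntegrableOn (fun x ↦ p x * deriv ψ x ^ 2) (Icc s t)) :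
    γ * ∫ x in Icc s t, ρ x * ψ x ^ 2 ≤ ∫ x in Icc s t, p x * deriv ψ x ^ 2 := by
  have hint := henergy.sub (hmass.const_mul γ)
  have hleft : Icc s x₀ ⊆ Icc s t := Icc_subset_Icc_right ht
  have hright : Icc x₀ t ⊆ Icc s t := Icc_subset_Icc_left hs
  have hflux_left := hb.piconeFlux_sub_le_integral hs (hleft.trans hS) (by simp)
    (fun x hx ↦ hψ x (hleft hx)) hψ₀ (hint.mono_set hleft)
  have hflux_right := hb.piconeFlux_sub_le_integral ht (hright.trans hS) (by simp)
    (fun x hx ↦ hψ x (hright hx)) hψ₀ (hint.mono_set hright)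
  have hsplit := intervalIntegral.integral_add_adjacent_intervals
    ((intervalIntegrable_iff_integrableOn_Icc_of_le hs).2 (hint.mono_set hleft))
    ((intervalIntegrable_iff_integrableOn_Icc_of_le ht).2 (hint.mono_set hright))
  have hst := hs.trans ht
  have hflux_s := hb.piconeFlux_nonpos (ψ := ψ) (hS (left_mem_Icc.2 hst)) hs
  have hflux_t := hb.piconeFlux_nonneg (ψ := ψ) (hS (right_mem_Icc.2 hst)) ht
  have htotal : ∫ x in s..t, (p x * deriv ψ x ^ 2 - γ * (ρ x * ψ x ^ 2)) =
      (∫ x in Icc s t, p x * deriv ψ x ^ 2) - γ * ∫ x in Icc s t, ρ x * ψ x ^ 2 := by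
    rw [intervalIntegral.integral_of_le hst, ← integral_Icc_eq_integral_Ioc,
      integral_sub henergy (hmass.const_mul γ), integral_const_mul]
  simp only [Pi.sub_apply] at hsplit
  linarith

theorem integrableOn_and_mul_setIntegral_Ioi_le (hb : IsSturmBarrier p ρ γ (Ioi l) x₀ h h')
    (hγ : 0 < γ) (hρ : ∀ x ∈ Ioi l, 0 ≤ ρ x) (hρ_cont : ContinuousOn ρ (Ioi l))
    (hψ : DifferentiableOn ℝ ψ (Ioi l)) (hψ₀ : ψ x₀ = 0)
    (henergy : IntegrableOn (fun x ↦ p x * deriv ψ x ^ 2) (Ioi l)) :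
    IntegrableOn (fun x ↦ ρ x * ψ x ^ 2) (Ioi l) ∧
      γ * ∫ x in Ioi l, ρ x * ψ x ^ 2 ≤ ∫ x in Ioi l, p x * deriv ψ x ^ 2 := by
  have hloc : LocallyIntegrableOn (fun x ↦ ρ x * ψ x ^ 2) (Ioi l) :=
    (hρ_cont.mul (hψ.continuousOn.pow 2)).locallyIntegrableOn measurableSet_Ioi
  rw [mul_comm γ, ← le_div_iff₀ hγ]
  refine integrableOn_Ioi_and_setIntegral_le hb.mem
    (fun x hx ↦ mul_nonneg (hρ x hx) (sq_nonneg _)) hloc fun s t hs hsx htx ↦ ?_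
  have hsub : Icc s t ⊆ Ioi l := fun x hx ↦ hs.trans_le hx.1
  rw [le_div_iff₀ hγ, mul_comm]
  calc γ * ∫ x in Icc s t, ρ x * ψ x ^ 2
      ≤ ∫ x in Icc s t, p x * deriv ψ x ^ 2 :=
        hb.mul_setIntegral_Icc_le hsx htx hsub
          (fun x hx ↦ hψ.differentiableAt (Ioi_mem_nhds (hsub hx))) hψ₀
          (hloc.integrableOn_compact_subset hsub isCompact_Icc) (henergy.mono_set hsub)
    _ ≤ ∫ x in Ioi l, p x * deriv ψ x ^ 2 :=
        setIntegral_mono_set henergy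
          (ae_restrict_of_forall_mem measurableSet_Ioi fun x hx ↦
            mul_nonneg (hb.coeff_nonneg x hx) (sq_nonneg _)) hsub.eventuallyLE

end IsSturmBarrier

theorem rpow_sub_rpow_mul_nonneg {x y a : ℝ} (hx : 0 < x) (hy : 0 < y) (ha : 0 ≤ a) (ha₁ : a ≤ 1) :
    0 ≤ (x ^ a - y ^ a) * (y ^ (a - 1) - x ^ (a - 1)) := by
  have ha' : a - 1 ≤ 0 := sub_nonpos.2 ha₁
  obtain hxy | hyx := le_total x y
  · exact mul_nonneg_of_nonpos_of_nonpos (sub_nonpos.2 (Real.rpow_le_rpow hx.le hxy ha))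
      (sub_nonpos.2 (Real.rpow_le_rpow_of_nonpos hx hxy ha'))
  · exact mul_nonneg (sub_nonneg.2 (Real.rpow_le_rpow hy.le hyx ha))
      (sub_nonneg.2 (Real.rpow_le_rpow_of_nonpos hy hyx ha'))

section InverseGamma

variable {κ m a t x : ℝ}

theorem stdInvGamma_pos (hκ : 0 < κ) (hm : 0 < m) (hx : 0 < x) : 0 < stdInvGamma κ m x := by
  have := Real.Gamma_pos_of_pos hκ
  unfold stdInvGamma
  positivity

theorem measurable_stdInvGamma : Measurable (stdInvGamma κ m) := by
  unfold stdInvGamma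
  fun_prop

/-- The Pearson equation of the inverse Gamma density. -/
theorem hasDerivAt_sq_mul_stdInvGamma (hx : 0 < x) :
    HasDerivAt (fun y ↦ y ^ 2 * stdInvGamma κ m y) ((m - (κ - 1) * x) * stdInvGamma κ m x) x := by
  have hpow : HasDerivAt (fun y : ℝ ↦ y ^ (-(1 + κ))) (-(1 + κ) * x ^ (-(1 + κ) - 1)) x :=
    Real.hasDerivAt_rpow_const (Or.inl hx.ne')
  have hexp : HasDerivAt (fun y : ℝ ↦ Real.exp (-m / y)) (Real.exp (-m / x) * (m / x ^ 2)) x := by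
    simpa [div_eq_mul_inv] using ((hasDerivAt_inv hx.ne').const_mul (-m)).exp
  refine ((hasDerivAt_pow 2 x).mul
    ((hpow.const_mul (m ^ κ / Real.Gamma κ)).mul hexp)).congr_deriv ?_
  simp only [Pi.mul_apply, stdInvGamma]
  rw [Real.rpow_sub_one hx.ne']
  field_simp
  ring

theorem continuousOn_stdInvGamma : ContinuousOn (stdInvGamma κ m) (Ioi 0) := by
  have hne (x : ℝ) (hx : x ∈ Ioi (0 : ℝ)) : x ≠ 0 := ne_of_gt hx
  unfold stdInvGamma
  exact (continuousOn_const.mul (continuousOn_id.rpow_const fun x hx ↦ Or.inl (hne x hx))).mul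
    (continuousOn_const.div continuousOn_id hne).rexp

theorem integral_rpow_mul_exp_neg_div_Ioi (ht : 0 < t) (hm : 0 < m) :
    ∫ x in Ioi (0 : ℝ), x ^ (-(1 + t)) * Real.exp (-m / x) = (1 / m) ^ t * Real.Gamma t := by
  rw [← Real.integral_rpow_mul_exp_neg_mul_Ioi ht hm,
    ← integral_comp_rpow_Ioi _ (neg_ne_zero.2 one_ne_zero)]
  refine setIntegral_congr_fun measurableSet_Ioi fun x (hx : 0 < x) ↦ ?_
  have hexponent : -1 - 1 + -1 * -(1 + t) = t - 1 := by ring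
  simp only [smul_eq_mul]
  rw [abs_neg, abs_one, one_mul, ← Real.rpow_mul hx.le, ← mul_assoc, ← Real.rpow_add hx,
    hexponent, Real.rpow_neg_one, div_inv_eq_mul, neg_mul]

theorem integral_rpow_mul_stdInvGamma (ht : t < κ) (hm : 0 < m) :
    ∫ x in Ioi (0 : ℝ), x ^ t * stdInvGamma κ m x =
      m ^ t * Real.Gamma (κ - t) / Real.Gamma κ := by
  have hshift : EqOn (fun x ↦ x ^ t * stdInvGamma κ m x) (fun x ↦ m ^ κ / Real.Gamma κ *
      (x ^ (-(1 + (κ - t))) * Real.exp (-m / x))) (Ioi 0) := fun x (hx : 0 < x) ↦ by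
    have hexponent : -(1 + (κ - t)) = t + -(1 + κ) := by ring
    simp only [stdInvGamma, hexponent, Real.rpow_add hx]
    ring
  rw [setIntegral_congr_fun measurableSet_Ioi hshift, integral_const_mul,
    integral_rpow_mul_exp_neg_div_Ioi (sub_pos.2 ht) hm, one_div, Real.inv_rpow hm.le,
    Real.rpow_sub hm]
  field_simp

/-- The probability distribution on `ℝ` with density `stdInvGamma κ m` on `(0, ∞)`. -/
noncomputable def stdInvGammaMeasure (κ m : ℝ) : Measure ℝ :=
  (volume.restrict (Ioi 0)).withDensity fun x ↦ ENNReal.ofReal (stdInvGamma κ m x)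

theorem integral_stdInvGammaMeasure (hκ : 0 < κ) (hm : 0 < m) (g : ℝ → ℝ) :
    ∫ x, g x ∂(stdInvGammaMeasure κ m) = ∫ x in Ioi (0 : ℝ), g x * stdInvGamma κ m x := by
  rw [stdInvGammaMeasure, integral_withDensity_eq_integral_toReal_smul
    measurable_stdInvGamma.ennreal_ofReal (by simp)]
  refine setIntegral_congr_fun measurableSet_Ioi fun x hx ↦ ?_
  simp only [ENNReal.toReal_ofReal (stdInvGamma_pos hκ hm hx).le, smul_eq_mul, mul_comm]

theorem integrable_stdInvGammaMeasure_iff (hκ : 0 < κ) (hm : 0 < m) {g : ℝ → ℝ} :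
    Integrable g (stdInvGammaMeasure κ m) ↔
      IntegrableOn (fun x ↦ g x * stdInvGamma κ m x) (Ioi 0) := by
  rw [stdInvGammaMeasure, integrable_withDensity_iff measurable_stdInvGamma.ennreal_ofReal
    (by simp)]
  refine integrableOn_congr_fun (fun x hx ↦ ?_) measurableSet_Ioi
  simp only [ENNReal.toReal_ofReal (stdInvGamma_pos hκ hm hx).le]

theorem integral_rpow_stdInvGammaMeasure (hκ : 0 < κ) (ht : t < κ) (hm : 0 < m) :
    ∫ x, x ^ t ∂(stdInvGammaMeasure κ m) = m ^ t * Real.Gamma (κ - t) / Real.Gamma κ := by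
  rw [integral_stdInvGammaMeasure hκ hm, integral_rpow_mul_stdInvGamma ht hm]

theorem isProbabilityMeasure_stdInvGammaMeasure (hκ : 0 < κ) (hm : 0 < m) :
    IsProbabilityMeasure (stdInvGammaMeasure κ m) := by
  have hmass := integral_rpow_stdInvGammaMeasure hκ hκ hm
  simp only [Real.rpow_zero, sub_zero, one_mul, div_self (Real.Gamma_pos_of_pos hκ).ne',
    integral_const, smul_eq_mul, mul_one] at hmass
  exact ⟨(ENNReal.toReal_eq_one_iff _).1 hmass⟩

theorem hasDerivAt_sq_mul_stdInvGamma_mul_rpow (hx : 0 < x) :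
    HasDerivAt (fun y ↦ y ^ 2 * stdInvGamma κ m y * (a * y ^ (a - 1)))
      (a * (m * x ^ (a - 1) - (κ - a) * x ^ a) * stdInvGamma κ m x) x := by
  have hpow := (Real.hasDerivAt_rpow_const (x := x) (p := a - 1) (Or.inl hx.ne')).const_mul a
  refine ((hasDerivAt_sq_mul_stdInvGamma (κ := κ) (m := m) hx).mul hpow).congr_deriv ?_
  rw [Real.rpow_sub_one hx.ne' (a - 1), Real.rpow_sub_one hx.ne' a]
  field_simp
  ring

theorem isSturmBarrier_rpow_sub_rpow (hm : 0 < m) (ha : 0 < a) (ha₁ : a ≤ 1)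
    (haκ : a < κ) :
    IsSturmBarrier (fun x ↦ x ^ 2 * stdInvGamma κ m x) (stdInvGamma κ m) (a * (κ - a)) (Ioi 0)
      (m / (κ - a)) (fun x ↦ x ^ a - (m / (κ - a)) ^ a) (fun x ↦ a * x ^ (a - 1)) := by
  have hκa : 0 < κ - a := sub_pos.2 haκ
  set x₀ := m / (κ - a)
  have hx₀ : 0 < x₀ := div_pos hm hκa
  have hm_eq : m = x₀ * (κ - a) := (div_mul_cancel₀ m hκa.ne').symm
  have hf {x : ℝ} (hx : 0 < x) : 0 < stdInvGamma κ m x := stdInvGamma_pos (ha.trans haκ) hm hx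
  refine ⟨ordConnected_Ioi, hx₀, sub_self _,
    fun x hx ↦ (Real.hasDerivAt_rpow_const (Or.inl (ne_of_gt hx))).sub_const _,
    fun x hx ↦ mul_pos ha (Real.rpow_pos_of_pos hx _),
    fun x hx ↦ (hasDerivAt_sq_mul_stdInvGamma_mul_rpow hx).differentiableAt,
    fun x (hx : 0 < x) ↦ ?_, fun x hx ↦ mul_nonneg (sq_nonneg x) (hf hx).le⟩
  rw [(hasDerivAt_sq_mul_stdInvGamma_mul_rpow hx).deriv]
  have hremainder : 0 ≤ a * (κ - a) * x₀ * stdInvGamma κ m x *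
      ((x ^ a - x₀ ^ a) * (x₀ ^ (a - 1) - x ^ (a - 1))) :=
    mul_nonneg (mul_pos (mul_pos (mul_pos ha hκa) hx₀) (hf hx)).le
      (rpow_sub_rpow_mul_nonneg hx hx₀ ha.le ha₁)
  have hx₀_rpow : x₀ ^ a = x₀ * x₀ ^ (a - 1) := by
    rw [Real.rpow_sub_one hx₀.ne', mul_div_cancel₀ _ hx₀.ne']
  set D := x ^ a - x₀ ^ a with hD
  linear_combination hremainder + a * stdInvGamma κ m x * D * x ^ (a - 1) * hm_eq
    - a * (κ - a) * stdInvGamma κ m x * D * (hx₀_rpow + hD)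

theorem memLp_and_mul_variance_stdInvGammaMeasure_le (hm : 0 < m) (ha : 0 < a)
    (ha₁ : a ≤ 1) (haκ : a < κ) {φ : ℝ → ℝ} (hφ : DifferentiableOn ℝ φ (Ioi 0))
    (henergy : Integrable (fun x ↦ x ^ 2 * deriv φ x ^ 2) (stdInvGammaMeasure κ m)) :
    MemLp φ 2 (stdInvGammaMeasure κ m) ∧ a * (κ - a) * Var[φ; stdInvGammaMeasure κ m] ≤
      ∫ x, x ^ 2 * deriv φ x ^ 2 ∂(stdInvGammaMeasure κ m) := by
  have hκ : 0 < κ := ha.trans haκ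
  have hγ : 0 < a * (κ - a) := mul_pos ha (sub_pos.2 haκ)
  have := isProbabilityMeasure_stdInvGammaMeasure hκ hm
  set μ := stdInvGammaMeasure κ m
  set c := φ (m / (κ - a))
  have hφ_meas : AEStronglyMeasurable φ μ :=
    (hφ.continuousOn.aestronglyMeasurable measurableSet_Ioi).mono_ac
      (withDensity_absolutelyContinuous _ _)
  have hψ_meas : AEStronglyMeasurable (fun x ↦ φ x - c) μ := hφ_meas.sub aestronglyMeasurable_const
  rw [integrable_stdInvGammaMeasure_iff hκ hm] at henergy
  obtain ⟨hint, hpoincare⟩ :=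
    (isSturmBarrier_rpow_sub_rpow hm ha ha₁ haκ).integrableOn_and_mul_setIntegral_Ioi_le
      hγ (fun x hx ↦ (stdInvGamma_pos hκ hm hx).le) continuousOn_stdInvGamma
      (ψ := fun x ↦ φ x - c) (hφ.sub_const c) (sub_self c)
      (by
        simpa only [deriv_sub_const_fun, mul_right_comm (_ ^ 2) (stdInvGamma κ m _)] using henergy)
  simp only [deriv_sub_const_fun, mul_right_comm (_ ^ 2) (stdInvGamma κ m _),
    mul_comm (stdInvGamma κ m _),
    ← integral_stdInvGammaMeasure hκ hm] at hint hpoincare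
  rw [← integrable_stdInvGammaMeasure_iff hκ hm, ← memLp_two_iff_integrable_sq hψ_meas] at hint
  refine ⟨by simpa [Pi.add_def] using hint.add (memLp_const c), ?_⟩
  calc a * (κ - a) * Var[φ; μ] = a * (κ - a) * Var[fun x ↦ φ x - c; μ] := by
        rw [variance_sub_const hφ_meas]
    _ ≤ a * (κ - a) * ∫ x, (φ x - c) ^ 2 ∂μ :=
        mul_le_mul_of_nonneg_left (variance_le_expectation_sq hψ_meas) hγ.le
    _ ≤ ∫ x, x ^ 2 * deriv φ x ^ 2 ∂μ := hpoincare

theorem variance_stdInvGammaMeasure_eq (hκ : 0 < κ) (hm : 0 < m) {φ : ℝ → ℝ}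
    (hφ : MemLp φ 2 (stdInvGammaMeasure κ m)) :
    Var[φ; stdInvGammaMeasure κ m] = (∫ x in Ioi (0 : ℝ), φ x ^ 2 * stdInvGamma κ m x) -
      (∫ x in Ioi (0 : ℝ), φ x * stdInvGamma κ m x) ^ 2 := by
  have := isProbabilityMeasure_stdInvGammaMeasure hκ hm
  simp only [variance_eq_sub hφ, Pi.pow_apply, integral_stdInvGammaMeasure hκ hm]

theorem integral_id_stdInvGammaMeasure (hκ : 1 < κ) (hm : 0 < m) :
    ∫ x, x ∂(stdInvGammaMeasure κ m) = m / (κ - 1) := by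
  have hmoment := integral_rpow_stdInvGammaMeasure (zero_lt_one.trans hκ) hκ hm
  have hΓ : Real.Gamma κ = (κ - 1) * Real.Gamma (κ - 1) := by
    rw [← Real.Gamma_add_one (sub_pos.2 hκ).ne', sub_add_cancel]
  have hΓ_pos := Real.Gamma_pos_of_pos (sub_pos.2 hκ)
  simp only [Real.rpow_one] at hmoment
  rw [hmoment, hΓ, mul_div_mul_right _ _ hΓ_pos.ne']

theorem integral_sq_stdInvGammaMeasure (hκ : 2 < κ) (hm : 0 < m) :
    ∫ x, x ^ 2 ∂(stdInvGammaMeasure κ m) = m ^ 2 / ((κ - 1) * (κ - 2)) := by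
  have hmoment := integral_rpow_stdInvGammaMeasure (zero_lt_two.trans hκ) hκ hm
  have hΓ : Real.Gamma κ = (κ - 1) * ((κ - 2) * Real.Gamma (κ - 2)) := by
    rw [← Real.Gamma_add_one (sub_pos.2 hκ).ne', show κ - 2 + 1 = κ - 1 by ring,
      ← Real.Gamma_add_one (by linarith), sub_add_cancel]
  have hΓ_pos := Real.Gamma_pos_of_pos (sub_pos.2 hκ)
  simp only [Real.rpow_two] at hmoment
  rw [hmoment, hΓ, ← mul_assoc, mul_div_mul_right _ _ hΓ_pos.ne']

theorem memLp_id_stdInvGammaMeasure (hκ : 2 < κ) (hm : 0 < m) :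
    MemLp (fun x ↦ x) 2 (stdInvGammaMeasure κ m) := by
  have h₁ : 0 < κ - 1 := by linarith
  have h₂ : 0 < κ - 2 := sub_pos.2 hκ
  refine (memLp_two_iff_integrable_sq measurable_id'.aestronglyMeasurable).2
    (.of_integral_ne_zero ?_)
  rw [integral_sq_stdInvGammaMeasure hκ hm]
  exact (div_pos (pow_pos hm 2) (mul_pos h₁ h₂)).ne'

theorem variance_id_stdInvGammaMeasure (hκ : 2 < κ) (hm : 0 < m) :
    Var[fun x ↦ x; stdInvGammaMeasure κ m] =
      1 / (κ - 1) * ∫ x, x ^ 2 ∂(stdInvGammaMeasure κ m) := by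
  have := isProbabilityMeasure_stdInvGammaMeasure (zero_lt_two.trans hκ) hm
  have h₁ : κ - 1 ≠ 0 := by linarith
  have h₂ : κ - 2 ≠ 0 := by linarith
  simp only [variance_eq_sub (memLp_id_stdInvGammaMeasure hκ hm), Pi.pow_apply,
    integral_sq_stdInvGammaMeasure hκ hm, integral_id_stdInvGammaMeasure (one_lt_two.trans hκ) hm]
  field_simp
  ring

theorem variance_affine_stdInvGammaMeasure (hκ : 2 < κ) (hm : 0 < m) (c d : ℝ) :
    Var[fun x ↦ c * x + d; stdInvGammaMeasure κ m] =
      1 / (κ - 1) * ∫ x, x ^ 2 * c ^ 2 ∂(stdInvGammaMeasure κ m) := by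
  have := isProbabilityMeasure_stdInvGammaMeasure (zero_lt_two.trans hκ) hm
  rw [variance_add_const (by fun_prop), variance_const_mul, variance_id_stdInvGammaMeasure hκ hm,
    integral_mul_const]
  ring

-- `a = min (κ / 2) 1` maximizes `a (κ - a)` over `(0, 1]`.
theorem exists_mul_sub_eq_chernoff_constant (hκ : 0 < κ) :
    ∃ a, 0 < a ∧ a ≤ 1 ∧ a < κ ∧ a * (κ - a) = if κ ≤ 2 then κ ^ 2 / 4 else κ - 1 := by
  split_ifs with h
  · exact ⟨κ / 2, by linarith, by linarith, by linarith, by ring⟩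
  · exact ⟨1, one_pos, le_rfl, by linarith, one_mul _⟩

end InverseGamma

theorem chernoff_std_inverse_gamma_general (κ m : ℝ) (hκ : 0 < κ) (hm : 0 < m) :
    (∀ φ : ℝ → ℝ, DifferentiableOn ℝ φ (Ioi 0) →
      IntegrableOn (fun x ↦ x ^ 2 * (deriv φ x) ^ 2 * stdInvGamma κ m x) (Ioi 0) →
      IntegrableOn (fun x ↦ φ x ^ 2 * stdInvGamma κ m x) (Ioi 0) ∧
      (∫ x in Ioi (0 : ℝ), φ x ^ 2 * stdInvGamma κ m x)
          - (∫ x in Ioi (0 : ℝ), φ x * stdInvGamma κ m x) ^ 2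
        ≤ (1 / (if κ ≤ 2 then κ ^ 2 / 4 else κ - 1)) *
            ∫ x in Ioi (0 : ℝ), x ^ 2 * (deriv φ x) ^ 2 * stdInvGamma κ m x) ∧
    (2 < κ → ∀ c d : ℝ,
      (∫ x in Ioi (0 : ℝ), (c * x + d) ^ 2 * stdInvGamma κ m x)
          - (∫ x in Ioi (0 : ℝ), (c * x + d) * stdInvGamma κ m x) ^ 2
        = (1 / (κ - 1)) * ∫ x in Ioi (0 : ℝ), x ^ 2 * c ^ 2 * stdInvGamma κ m x) := by
  refine ⟨fun φ hφ henergy ↦ ?_, fun h₂ c d ↦ ?_⟩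
  · obtain ⟨a, ha, ha₁, haκ, hγ⟩ := exists_mul_sub_eq_chernoff_constant hκ
    obtain ⟨hmem, hvar⟩ := memLp_and_mul_variance_stdInvGammaMeasure_le hm ha ha₁ haκ hφ
      ((integrable_stdInvGammaMeasure_iff hκ hm).2 henergy)
    refine ⟨(integrable_stdInvGammaMeasure_iff hκ hm).1 hmem.integrable_sq, ?_⟩
    rw [← variance_stdInvGammaMeasure_eq hκ hm hmem, ← integral_stdInvGammaMeasure hκ hm, ← hγ,
      one_div_mul_eq_div, le_div_iff₀' (mul_pos ha (sub_pos.2 haκ))]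
    exact hvar
  · have := isProbabilityMeasure_stdInvGammaMeasure hκ hm
    have hmem : MemLp (fun x ↦ c * x + d) 2 (stdInvGammaMeasure κ m) :=
      ((memLp_id_stdInvGammaMeasure h₂ hm).const_mul c).add (memLp_const d)
    rw [← variance_stdInvGammaMeasure_eq hκ hm hmem, ← integral_stdInvGammaMeasure hκ hm]
    exact variance_affine_stdInvGammaMeasure h₂ hm c d

/-- **Chernoff inequality for the standard inverse Gamma density** (inequality (2.24)).
For `κ > 0`, `m > 0` and every smooth `φ` on `ℝ₊` with `∫ φ² f_{κ,m}` finite (and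
finite right-hand side),
`∫ φ² f_{κ,m} − (∫ φ f_{κ,m})² ≤ (1/γ(κ)) ∫ x² (φ')² f_{κ,m}`, where
`γ(κ) = κ²/4` for `0 < κ ≤ 2` and `γ(κ) = κ−1` for `κ > 2`. Moreover, for `κ > 2`
the inequality is an equality when `φ(x) = c x + d` is linear in `x`. -/
theorem chernoff_std_inverse_gamma
    (κ m : ℝ) (hκ : 0 < κ) (hm : 0 < m) :
    (∀ φ : ℝ → ℝ, ContDiffOn ℝ (⊤ : ℕ∞) φ (Ioi 0) →
      IntegrableOn (fun x => φ x ^ 2 * stdInvGamma κ m x) (Ioi 0) →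
      IntegrableOn (fun x => x ^ 2 * (deriv φ x) ^ 2 * stdInvGamma κ m x) (Ioi 0) →
      (∫ x in Ioi (0 : ℝ), φ x ^ 2 * stdInvGamma κ m x)
          - (∫ x in Ioi (0 : ℝ), φ x * stdInvGamma κ m x) ^ 2
        ≤ (1 / (if κ ≤ 2 then κ ^ 2 / 4 else κ - 1)) *
            ∫ x in Ioi (0 : ℝ), x ^ 2 * (deriv φ x) ^ 2 * stdInvGamma κ m x) ∧
    (2 < κ → ∀ c d : ℝ,
      (∫ x in Ioi (0 : ℝ), (c * x + d) ^ 2 * stdInvGamma κ m x)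
          - (∫ x in Ioi (0 : ℝ), (c * x + d) * stdInvGamma κ m x) ^ 2
        = (1 / (κ - 1)) * ∫ x in Ioi (0 : ℝ), x ^ 2 * c ^ 2 * stdInvGamma κ m x) :=
  ⟨fun φ hφ _ henergy ↦ ((chernoff_std_inverse_gamma_general κ m hκ hm).1 φ
    (hφ.differentiableOn (by simp)) henergy).2,
    (chernoff_std_inverse_gamma_general κ m hκ hm).2⟩
end

section
/- Let β > 1 and let X be a random variable distributed on ℝ with the Cauchy-type density f_β(x) = C_β/(1+x²)^β. Then for every α with 1 < α < β and every bounded smooth function φ on ℝ such that Ent[φ²(X)] is finite, the weighted logarithmic Sobolev inequality Ent[φ²(X)] ≤ (2/ρ_{β,α}) E[(1+X²)^α (φ'(X))²] holds, where ρ_{β,α} = (2β − α)((α−1)/(2−α))^{3−2α} for 1 < α < 3/2, and ρ_{β,α} = 2β − α for 3/2 ≤ α < β (the latter case requiring β > 3/2). -/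
open MeasureTheory Set

open Filter ProbabilityTheory Topology

/-!
In the coordinate `Y` with `dY = (1 + x²)^{-α/2} dx`, bounded because `α > 1`, the Cauchy-type
density becomes `e^{-V}` with `d²V/dY² ≥ ρ`, and the weighted energy becomes the unweighted one.
The optimal-transport proof of the Bakry–Émery inequality then applies. Let `T` be the monotone
map pushing `g e^{-V} dY` forward to `e^{-V} dY`. The logarithm of its Jacobian is at most the
Jacobian minus one, and `V` lies above its tangent parabolas, so `g log g` is bounded pointwise;
after integration by parts Young's inequality absorbs the displacement into the quadratic term,
which bounds the entropy of `g` by its Fisher information. The theorem is the case `g = φ² + ε`,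
`ε → 0`.
-/

section Entropy

variable {Ω : Type*} [MeasurableSpace Ω] {μ : Measure Ω} {g : Ω → ℝ} {M : ℝ}

/-- The entropy `Ent[g] = E[g log g] - E[g] log E[g]` of a nonnegative function `g` under `μ`, with
`0 log 0 = 0`. -/
noncomputable def entropy (μ : Measure Ω) (g : Ω → ℝ) : ℝ :=
  ∫ x, g x * Real.log (g x) ∂μ - (∫ x, g x ∂μ) * Real.log (∫ x, g x ∂μ)

lemma entropy_const_mul (hg : Integrable g μ)
    (hlog : Integrable (fun x => g x * Real.log (g x)) μ) (c : ℝ) :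
    entropy μ (fun x => c * g x) = c * entropy μ g := by
  have mul_log_mul (t : ℝ) :
      c * t * Real.log (c * t) = c * Real.log c * t + c * (t * Real.log t) := by
    have := Real.negMulLog_mul c t
    simp only [Real.negMulLog] at this
    linarith
  simp only [entropy, mul_log_mul, integral_const_mul,
    integral_add (hg.const_mul _) (hlog.const_mul _)]
  ring

lemma exists_abs_mul_log_le (M : ℝ) : ∃ K, ∀ t ∈ Icc 0 M, |t * Real.log t| ≤ K :=
  isCompact_Icc.exists_bound_of_continuousOn Real.continuous_mul_log.continuousOn

lemma integrable_mul_log_of_bounded [IsFiniteMeasure μ] (hg : AEStronglyMeasurable g μ)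
    (hg0 : ∀ x, 0 ≤ g x) (hgM : ∀ x, g x ≤ M) :
    Integrable (fun x => g x * Real.log (g x)) μ := by
  obtain ⟨K, hK⟩ := exists_abs_mul_log_le M
  exact .of_bound (Real.continuous_mul_log.comp_aestronglyMeasurable hg) K
    (.of_forall fun x => hK _ ⟨hg0 x, hgM x⟩)

lemma tendsto_entropy_add_const [IsFiniteMeasure μ] (hg : AEStronglyMeasurable g μ)
    (hg0 : ∀ x, 0 ≤ g x) (hgM : ∀ x, g x ≤ M) :
    Tendsto (fun ε => entropy μ fun x => g x + ε) (𝓝[>] 0) (𝓝 (entropy μ g)) := by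
  have add_tendsto (t : ℝ) : Tendsto (fun ε => t + ε) (𝓝[>] 0) (𝓝 t) :=
    ((continuous_const_add t).tendsto' 0 t (add_zero t)).mono_left nhdsWithin_le_nhds
  have mul_log_tendsto (t : ℝ) := (Real.continuous_mul_log.tendsto t).comp (add_tendsto t)
  have small : ∀ᶠ ε : ℝ in 𝓝[>] 0, ε ∈ Ioo 0 1 := Ioo_mem_nhdsGT one_pos
  have mean_tendsto : Tendsto (fun ε => ∫ x, g x + ε ∂μ) (𝓝[>] 0) (𝓝 (∫ x, g x ∂μ)) := by
    refine tendsto_integral_filter_of_dominated_convergence (fun _ => M + 1)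
      (.of_forall fun ε => hg.add aestronglyMeasurable_const) ?_ (integrable_const _)
      (.of_forall fun x => add_tendsto (g x))
    filter_upwards [small] with ε hε
    refine .of_forall fun x => ?_
    rw [Real.norm_of_nonneg (add_nonneg (hg0 x) hε.1.le)]
    exact add_le_add (hgM x) hε.2.le
  obtain ⟨K, hK⟩ := exists_abs_mul_log_le (M + 1)
  refine Tendsto.sub ?_ ((Real.continuous_mul_log.tendsto _).comp mean_tendsto)
  refine tendsto_integral_filter_of_dominated_convergence (fun _ => K)
    (.of_forall fun ε => Real.continuous_mul_log.comp_aestronglyMeasurable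
      (hg.add aestronglyMeasurable_const)) ?_ (integrable_const _)
    (.of_forall fun x => mul_log_tendsto (g x))
  filter_upwards [small] with ε hε
  exact .of_forall fun x =>
    hK _ ⟨add_nonneg (hg0 x) hε.1.le, add_le_add (hgM x) hε.2.le⟩

end Entropy

section Density

variable {p q : ℝ → ℝ}

/-- The measure on `ℝ` with Lebesgue density `p`; negative values of `p` are truncated to `0`. -/
noncomputable def densityMeasure (p : ℝ → ℝ) : Measure ℝ :=
  volume.withDensity fun x => ENNReal.ofReal (p x)

lemma integral_densityMeasure (hp : Measurable p) (hp0 : ∀ x, 0 ≤ p x) (g : ℝ → ℝ) :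
    ∫ x, g x ∂densityMeasure p = ∫ x, g x * p x := by
  rw [densityMeasure, integral_withDensity_eq_integral_toReal_smul hp.ennreal_ofReal
    (.of_forall fun _ => ENNReal.ofReal_lt_top)]
  simp only [ENNReal.toReal_ofReal (hp0 _), smul_eq_mul, mul_comm]

lemma integrable_densityMeasure (hp : Measurable p) (hp0 : ∀ x, 0 ≤ p x) {g : ℝ → ℝ} :
    Integrable g (densityMeasure p) ↔ Integrable fun x => g x * p x := by
  rw [densityMeasure, integrable_withDensity_iff_integrable_smul' hp.ennreal_ofReal
    (.of_forall fun _ => ENNReal.ofReal_lt_top)]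
  simp only [ENNReal.toReal_ofReal (hp0 _), smul_eq_mul, mul_comm]

lemma isProbabilityMeasure_densityMeasure (hp0 : ∀ x, 0 ≤ p x) (hp1 : ∫ x, p x = 1) :
    IsProbabilityMeasure (densityMeasure p) where
  measure_univ := by
    rw [densityMeasure, withDensity_apply _ .univ, Measure.restrict_univ,
      ← ofReal_integral_eq_lintegral_ofReal (integrable_of_integral_eq_one hp1) (.of_forall hp0),
      hp1, ENNReal.ofReal_one]

lemma cdf_densityMeasure (hp0 : ∀ x, 0 ≤ p x) (hp1 : ∫ x, p x = 1) (x : ℝ) :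
    cdf (densityMeasure p) x = ∫ t in Iic x, p t := by
  have := isProbabilityMeasure_densityMeasure hp0 hp1
  rw [cdf_eq_real, measureReal_def, densityMeasure, withDensity_apply _ measurableSet_Iic,
    ← ofReal_integral_eq_lintegral_ofReal (integrable_of_integral_eq_one hp1).restrict
      (.of_forall hp0),
    ENNReal.toReal_ofReal (integral_nonneg hp0)]

lemma hasDerivAt_cdf_densityMeasure (hpc : Continuous p) (hp0 : ∀ x, 0 ≤ p x)
    (hp1 : ∫ x, p x = 1) (x : ℝ) : HasDerivAt (cdf (densityMeasure p)) (p x) x := by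
  have hp := integrable_of_integral_eq_one hp1
  have cdf_eq (y : ℝ) :
      cdf (densityMeasure p) y = (∫ t in Iic 0, p t) + ∫ t in (0 : ℝ)..y, p t := by
    rw [cdf_densityMeasure hp0 hp1, ← intervalIntegral.integral_Iic_sub_Iic hp.integrableOn
      hp.integrableOn, add_sub_cancel]
  exact ((hpc.integral_hasStrictDerivAt 0 x).hasDerivAt.const_add _).congr_of_eventuallyEq
    (.of_forall cdf_eq)

lemma strictMono_cdf_densityMeasure (hpc : Continuous p) (hp0 : ∀ x, 0 < p x)
    (hp1 : ∫ x, p x = 1) : StrictMono (cdf (densityMeasure p)) :=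
  strictMono_of_hasDerivAt_pos (hasDerivAt_cdf_densityMeasure hpc (fun x => (hp0 x).le) hp1) hp0

lemma range_cdf_densityMeasure (hpc : Continuous p) (hp0 : ∀ x, 0 < p x) (hp1 : ∫ x, p x = 1) :
    range (cdf (densityMeasure p)) = Ioo 0 1 := by
  set F := cdf (densityMeasure p)
  have hF : StrictMono F := strictMono_cdf_densityMeasure hpc hp0 hp1
  have hFc : Continuous F := continuous_iff_continuousAt.2 fun x =>
    (hasDerivAt_cdf_densityMeasure hpc (fun x => (hp0 x).le) hp1 x).continuousAt
  ext y
  constructor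
  · rintro ⟨x, rfl⟩
    exact ⟨(cdf_nonneg _ (x - 1)).trans_lt (hF (by linarith)),
      (hF (by linarith)).trans_le (cdf_le_one _ (x + 1))⟩
  · rintro ⟨hy0, hy1⟩
    obtain ⟨a, ha⟩ := ((tendsto_cdf_atBot _).eventually (gt_mem_nhds hy0)).exists
    obtain ⟨b, hb⟩ := ((tendsto_cdf_atTop _).eventually (lt_mem_nhds hy1)).exists
    exact mem_range_of_exists_le_of_exists_ge hFc ⟨a, ha.le⟩ ⟨b, hb.le⟩

lemma exists_hasDerivAt_transport (hpc : Continuous p) (hp0 : ∀ x, 0 < p x) (hp1 : ∫ x, p x = 1)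
    (hqc : Continuous q) (hq0 : ∀ x, 0 < q x) (hq1 : ∫ x, q x = 1) :
    ∃ T : ℝ → ℝ, ∀ x, HasDerivAt T (q x / p (T x)) x := by
  set F := cdf (densityMeasure p)
  set Q := cdf (densityMeasure q)
  have hF (y : ℝ) : HasDerivAt F (p y) y :=
    hasDerivAt_cdf_densityMeasure hpc (fun x => (hp0 x).le) hp1 y
  have hQ (x : ℝ) : HasDerivAt Q (q x) x :=
    hasDerivAt_cdf_densityMeasure hqc (fun x => (hq0 x).le) hq1 x
  have leftInv : Function.LeftInverse (Function.invFun F) F :=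
    Function.leftInverse_invFun (strictMono_cdf_densityMeasure hpc hp0 hp1).injective
  have hInv (y : ℝ) : HasDerivAt (Function.invFun F) (p y)⁻¹ (F y) :=
    ((hasStrictDerivAt_of_hasDerivAt_of_continuousAt (.of_forall hF)
      hpc.continuousAt).to_local_left_inverse (hp0 y).ne' (.of_forall leftInv)).hasDerivAt
  refine ⟨Function.invFun F ∘ Q, fun x => ?_⟩
  obtain ⟨y, hy⟩ : Q x ∈ range F := by
    rw [range_cdf_densityMeasure hpc hp0 hp1, ← range_cdf_densityMeasure hqc hq0 hq1]
    exact mem_range_self x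
  have hTx : (Function.invFun F ∘ Q) x = y := by rw [Function.comp_apply, ← hy, leftInv y]
  rw [hTx, div_eq_inv_mul]
  exact (hy ▸ hInv y).comp x (hQ x)

end Density

lemma integral_le_integral_of_le_deriv_add {E E' u r A B : ℝ → ℝ}
    (hE : ∀ x, HasDerivAt E (E' x) x) (hu : Integrable u) (hr : Integrable r)
    (hle : ∀ x, u x ≤ E' x + r x) (hA : Tendsto A atBot (𝓝 0)) (hAE : ∀ x, A x ≤ E x)
    (hB : Tendsto B atTop (𝓝 0)) (hEB : ∀ x, E x ≤ B x) : ∫ x, u x ≤ ∫ x, r x := by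
  have hEc : Continuous E := continuous_iff_continuousAt.2 fun x => (hE x).continuousAt
  have on_interval (n : ℝ) (hn : 0 ≤ n) : A (-n) - B n ≤ ∫ x in (-n)..n, r x - u x := by
    have ftc : (-E) n - (-E) (-n) ≤ ∫ x in (-n)..n, r x - u x :=
      intervalIntegral.sub_le_integral_of_hasDeriv_right_of_le (by linarith) hEc.neg.continuousOn
        (fun x _ => (hE x).neg.hasDerivWithinAt) (hr.sub hu).integrableOn
        (fun x _ => by linarith [hle x])
    simp only [Pi.neg_apply] at ftc
    linarith [hAE (-n), hEB n]
  have lim_left : Tendsto (fun n => A (-n) - B n) atTop (𝓝 0) := by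
    simpa using (hA.comp tendsto_neg_atTop_atBot).sub hB
  have lim_right := intervalIntegral_tendsto_integral (hr.sub hu) tendsto_neg_atTop_atBot tendsto_id
  have := le_of_tendsto_of_tendsto lim_left lim_right
    ((eventually_ge_atTop 0).mono on_interval)
  simp only [Pi.sub_apply] at this
  rw [integral_sub hr hu] at this
  linarith

lemma young_displacement {ρ a b c d : ℝ} (hρ : 0 < ρ) (hb : 0 < b) (hc : 0 < c) :
    -(a * d) ≤ ρ / 2 * d ^ 2 * (b * c) + (2 * ρ)⁻¹ * (a ^ 2 / (b * c ^ 2)) * c := by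
  have square : 0 ≤ (ρ * b * c * d + a) ^ 2 / (2 * ρ * b * c) := by positivity
  have expand : (ρ * b * c * d + a) ^ 2 / (2 * ρ * b * c) =
      ρ / 2 * d ^ 2 * (b * c) + a * d + (2 * ρ)⁻¹ * (a ^ 2 / (b * c ^ 2)) * c := by
    field_simp
    ring
  linarith

/-- `V` is `ρ`-convex as a function of the increasing coordinate `Y`. Here `w = dY/dx` and
`P = dV/dY`, so the last field says `d²V/dY² ≥ ρ` without asking for a second derivative. -/
structure IsStronglyConvexAlong (ρ : ℝ) (V P Y w : ℝ → ℝ) : Prop where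
  hasDerivAt_coord : ∀ x, HasDerivAt Y (w x) x
  weight_pos : ∀ x, 0 < w x
  hasDerivAt_potential : ∀ x, HasDerivAt V (P x * w x) x
  monotone_slope_sub : Monotone fun x => P x - ρ * Y x

/-- The measure `e^{-V} w dx` on `ℝ`. -/
noncomputable def gibbsMeasure (V w : ℝ → ℝ) : Measure ℝ :=
  densityMeasure fun x => Real.exp (-V x) * w x

/-- The flux `g e^{-V} (Y ∘ T - Y)` of the transport argument: the displacement of `T`, measured in
the coordinate `Y`, times the density of `g e^{-V} w dx` with respect to `dY = w dx`. -/
noncomputable def transportFlux (V Y g T : ℝ → ℝ) (x : ℝ) : ℝ :=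
  g x * Real.exp (-V x) * (Y (T x) - Y x)

namespace IsStronglyConvexAlong

variable {ρ M : ℝ} {V P Y w g g' φ : ℝ → ℝ}

lemma tangent_le (h : IsStronglyConvexAlong ρ V P Y w) (x y : ℝ) :
    V x + P x * (Y y - Y x) + ρ / 2 * (Y y - Y x) ^ 2 ≤ V y := by
  set K : ℝ → ℝ := fun z => V z - P x * (Y z - Y x) - ρ / 2 * (Y z - Y x) ^ 2
  have hK (z : ℝ) : HasDerivAt K (w z * ((P z - ρ * Y z) - (P x - ρ * Y x))) z := by
    have hY := (h.hasDerivAt_coord z).sub_const (Y x)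
    exact (((h.hasDerivAt_potential z).sub (hY.const_mul (P x))).sub
      ((hY.pow 2).const_mul (ρ / 2))).congr_deriv (by push_cast; ring)
  have hKd : Differentiable ℝ K := fun z => (hK z).differentiableAt
  have isMin : IsMinOn K univ x := by
    refine isMinOn_univ_of_deriv hKd.continuous.continuousAt hKd.differentiableOn
      hKd.differentiableOn (fun z hz => ?_) (fun z hz => ?_)
    · rw [(hK z).deriv]
      exact mul_nonpos_of_nonneg_of_nonpos (h.weight_pos z).le
        (sub_nonpos.2 (h.monotone_slope_sub hz.le))
    · rw [(hK z).deriv]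
      exact mul_nonneg (h.weight_pos z).le (sub_nonneg.2 (h.monotone_slope_sub hz.le))
  have : V x ≤ V y - P x * (Y y - Y x) - ρ / 2 * (Y y - Y x) ^ 2 := by
    simpa [K] using isMin (mem_univ y)
  linarith

lemma bddBelow_range_potential (h : IsStronglyConvexAlong ρ V P Y w) (hρ : 0 ≤ ρ)
    (hY : Bornology.IsBounded (range Y)) : BddBelow (range V) := by
  obtain ⟨R, hR⟩ := Metric.isBounded_range_iff.1 hY
  refine ⟨V 0 - |P 0| * R, forall_mem_range.2 fun x => ?_⟩
  have slope_le : |P 0 * (Y x - Y 0)| ≤ |P 0| * R := by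
    rw [abs_mul]
    exact mul_le_mul_of_nonneg_left (hR x 0) (abs_nonneg _)
  have quad_nonneg : 0 ≤ ρ / 2 * (Y x - Y 0) ^ 2 := by positivity
  linarith [h.tangent_le 0 x, neg_abs_le (P 0 * (Y x - Y 0))]

lemma monotone_coord (h : IsStronglyConvexAlong ρ V P Y w) : Monotone Y :=
  monotone_of_hasDerivAt_nonneg h.hasDerivAt_coord fun x => (h.weight_pos x).le

/- The Jacobian equation says that `u = T' w(T) / w`, the derivative of `Y ∘ T` with respect to
`Y`, equals `g exp(V(T) - V)`; then `log u ≤ u - 1`. -/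
lemma log_le_of_jacobian (h : IsStronglyConvexAlong ρ V P Y w) {x y t s : ℝ} (hs : 0 < s)
    (hjac : t * (Real.exp (-V y) * w y) = s * (Real.exp (-V x) * w x)) :
    Real.log s ≤ t * w y / w x - 1 - P x * (Y y - Y x) - ρ / 2 * (Y y - Y x) ^ 2 := by
  have hu : t * w y / w x = s * Real.exp (V y - V x) := by
    rw [div_eq_iff (h.weight_pos x).ne', sub_eq_add_neg, Real.exp_add]
    rw [Real.exp_neg (V y)] at hjac
    field_simp at hjac
    linarith
  have log_u : Real.log (s * Real.exp (V y - V x)) = Real.log s + (V y - V x) := by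
    rw [Real.log_mul hs.ne' (Real.exp_ne_zero _), Real.log_exp]
  have := Real.log_le_sub_one_of_pos (mul_pos hs (Real.exp_pos (V y - V x)))
  rw [hu]
  linarith [h.tangent_le x y]

lemma hasDerivAt_transportFlux (h : IsStronglyConvexAlong ρ V P Y w) {T : ℝ → ℝ}
    {x s t : ℝ} (hg : HasDerivAt g s x) (hT : HasDerivAt T t x) :
    HasDerivAt (transportFlux V Y g T)
      (Real.exp (-V x) * ((s - g x * (P x * w x)) * (Y (T x) - Y x) +
        g x * (t * w (T x) - w x))) x := by
  have hexp := (h.hasDerivAt_potential x).fun_neg.exp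
  have hdisp := ((h.hasDerivAt_coord (T x)).comp x hT).sub (h.hasDerivAt_coord x)
  exact ((hg.mul hexp).mul hdisp).congr_deriv (by
    simp only [Pi.mul_apply, Function.comp_apply, Pi.sub_apply]; ring)

lemma mul_log_le_deriv_transportFlux_add (h : IsStronglyConvexAlong ρ V P Y w) (hρ : 0 < ρ)
    {x y t s s' : ℝ} (hs : 0 < s)
    (hjac : t * (Real.exp (-V y) * w y) = s * (Real.exp (-V x) * w x)) :
    s * Real.log s * (Real.exp (-V x) * w x) ≤
      Real.exp (-V x) * ((s' - s * (P x * w x)) * (Y y - Y x) + s * (t * w y - w x)) +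
        (2 * ρ)⁻¹ * (s' ^ 2 / (s * w x ^ 2)) * (Real.exp (-V x) * w x) := by
  have hw := h.weight_pos x
  have log_le := mul_le_mul_of_nonneg_left (h.log_le_of_jacobian hs hjac) (mul_pos hs hw).le
  have cancel : s * w x * (t * w y / w x) = s * (t * w y) := by field_simp
  have young := young_displacement (a := s') (d := Y y - Y x) hρ hs hw
  calc s * Real.log s * (Real.exp (-V x) * w x)
      = Real.exp (-V x) * (s * w x * Real.log s) := by ring
    _ ≤ Real.exp (-V x) * ((s' - s * (P x * w x)) * (Y y - Y x) + s * (t * w y - w x) +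
          (2 * ρ)⁻¹ * (s' ^ 2 / (s * w x ^ 2)) * w x) := by
        gcongr
        linarith
    _ = _ := by ring

/- At `+∞` (at `-∞`) the displacement is at most (at least) the gap between `Y` and its supremum
(infimum), so the boundary terms have the right sign in the limit even if `e^{-V}` does not
vanish there. -/
lemma exists_transportFlux_bounds (h : IsStronglyConvexAlong ρ V P Y w) (hρ : 0 ≤ ρ)
    (hY : Bornology.IsBounded (range Y)) (hg0 : ∀ x, 0 ≤ g x) (hgM : ∀ x, g x ≤ M)
    (T : ℝ → ℝ) : ∃ A B : ℝ → ℝ, Tendsto A atBot (𝓝 0) ∧ Tendsto B atTop (𝓝 0) ∧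
      ∀ x, transportFlux V Y g T x ∈ Icc (A x) (B x) := by
  obtain ⟨b, hb⟩ := h.bddBelow_range_potential hρ hY
  set K := M * Real.exp (-b)
  have weight_le (x : ℝ) : g x * Real.exp (-V x) ≤ K :=
    mul_le_mul (hgM x) (Real.exp_le_exp.2 (neg_le_neg (hb (mem_range_self x))))
      (Real.exp_pos _).le ((hg0 x).trans (hgM x))
  have weight_nonneg (x : ℝ) : 0 ≤ g x * Real.exp (-V x) :=
    mul_nonneg (hg0 x) (Real.exp_pos _).le
  have inf_le := ciInf_le hY.bddBelow
  have le_sup := le_ciSup hY.bddAbove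
  refine ⟨fun x => K * ((⨅ y, Y y) - Y x), fun x => K * ((⨆ y, Y y) - Y x), ?_, ?_,
    fun x => ⟨?_, ?_⟩⟩
  · simpa using ((tendsto_atBot_ciInf h.monotone_coord hY.bddBelow).const_sub
      (⨅ y, Y y)).const_mul K
  · simpa using ((tendsto_atTop_ciSup h.monotone_coord hY.bddAbove).const_sub
      (⨆ y, Y y)).const_mul K
  · calc K * ((⨅ y, Y y) - Y x) ≤ g x * Real.exp (-V x) * ((⨅ y, Y y) - Y x) :=
          mul_le_mul_of_nonpos_right (weight_le x) (sub_nonpos.2 (inf_le x))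
      _ ≤ g x * Real.exp (-V x) * (Y (T x) - Y x) :=
          mul_le_mul_of_nonneg_left (sub_le_sub_right (inf_le _) _) (weight_nonneg x)
  · calc g x * Real.exp (-V x) * (Y (T x) - Y x)
        ≤ g x * Real.exp (-V x) * ((⨆ y, Y y) - Y x) :=
          mul_le_mul_of_nonneg_left (sub_le_sub_right (le_sup _) _) (weight_nonneg x)
      _ ≤ K * ((⨆ y, Y y) - Y x) :=
          mul_le_mul_of_nonneg_right (weight_le x) (sub_nonneg.2 (le_sup x))

lemma density_pos (h : IsStronglyConvexAlong ρ V P Y w) (x : ℝ) : 0 < Real.exp (-V x) * w x :=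
  mul_pos (Real.exp_pos _) (h.weight_pos x)

lemma continuous_density (h : IsStronglyConvexAlong ρ V P Y w) (hw : Continuous w) :
    Continuous fun x => Real.exp (-V x) * w x := by
  have hV : Continuous V :=
    continuous_iff_continuousAt.2 fun x => (h.hasDerivAt_potential x).continuousAt
  fun_prop

lemma integral_gibbsMeasure (h : IsStronglyConvexAlong ρ V P Y w) (hw : Continuous w)
    (g : ℝ → ℝ) : ∫ x, g x ∂gibbsMeasure V w = ∫ x, g x * (Real.exp (-V x) * w x) :=
  integral_densityMeasure (h.continuous_density hw).measurable (fun x => (h.density_pos x).le) g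

lemma integrable_gibbsMeasure (h : IsStronglyConvexAlong ρ V P Y w) (hw : Continuous w) :
    Integrable g (gibbsMeasure V w) ↔ Integrable fun x => g x * (Real.exp (-V x) * w x) :=
  integrable_densityMeasure (h.continuous_density hw).measurable fun x => (h.density_pos x).le

theorem entropy_le_of_integral_eq_one (h : IsStronglyConvexAlong ρ V P Y w) (hρ : 0 < ρ)
    (hw : Continuous w) (hY : Bornology.IsBounded (range Y))
    [IsProbabilityMeasure (gibbsMeasure V w)] (hg0 : ∀ x, 0 < g x) (hgM : ∀ x, g x ≤ M)
    (hg : ∀ x, HasDerivAt g (g' x) x) (hg1 : ∫ x, g x ∂gibbsMeasure V w = 1)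
    (hfisher : Integrable (fun x => g' x ^ 2 / (g x * w x ^ 2)) (gibbsMeasure V w)) :
    entropy (gibbsMeasure V w) g ≤
      (2 * ρ)⁻¹ * ∫ x, g' x ^ 2 / (g x * w x ^ 2) ∂gibbsMeasure V w := by
  have hgc : Continuous g := continuous_iff_continuousAt.2 fun x => (hg x).continuousAt
  have hp1 : ∫ x, Real.exp (-V x) * w x = 1 := by
    simpa using (h.integral_gibbsMeasure hw fun _ => 1).symm
  have hgp1 : ∫ x, g x * (Real.exp (-V x) * w x) = 1 := by rw [← h.integral_gibbsMeasure hw, hg1]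
  obtain ⟨T, hT⟩ := exists_hasDerivAt_transport (h.continuous_density hw) h.density_pos hp1
    (hgc.mul (h.continuous_density hw)) (fun x => mul_pos (hg0 x) (h.density_pos x)) hgp1
  obtain ⟨A, B, hA, hB, hAB⟩ := h.exists_transportFlux_bounds hρ.le hY (fun x => (hg0 x).le) hgM T
  have hlog := integrable_mul_log_of_bounded (μ := gibbsMeasure V w) hgc.aestronglyMeasurable
    (fun x => (hg0 x).le) hgM
  rw [entropy, hg1, Real.log_one, mul_zero, sub_zero, ← integral_const_mul,
    h.integral_gibbsMeasure hw, h.integral_gibbsMeasure hw]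
  exact integral_le_integral_of_le_deriv_add
    (fun x => h.hasDerivAt_transportFlux (hg x) (hT x))
    ((h.integrable_gibbsMeasure hw).1 hlog)
    ((h.integrable_gibbsMeasure hw).1 (hfisher.const_mul (2 * ρ)⁻¹))
    (fun x => h.mul_log_le_deriv_transportFlux_add hρ (hg0 x)
      (div_mul_cancel₀ _ (h.density_pos (T x)).ne'))
    hA (fun x => (hAB x).1) hB (fun x => (hAB x).2)

theorem entropy_le (h : IsStronglyConvexAlong ρ V P Y w) (hρ : 0 < ρ)
    (hw : Continuous w) (hY : Bornology.IsBounded (range Y))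
    [IsProbabilityMeasure (gibbsMeasure V w)] (hg0 : ∀ x, 0 < g x) (hgM : ∀ x, g x ≤ M)
    (hg : ∀ x, HasDerivAt g (g' x) x)
    (hfisher : Integrable (fun x => g' x ^ 2 / (g x * w x ^ 2)) (gibbsMeasure V w)) :
    entropy (gibbsMeasure V w) g ≤
      (2 * ρ)⁻¹ * ∫ x, g' x ^ 2 / (g x * w x ^ 2) ∂gibbsMeasure V w := by
  have hgm : AEStronglyMeasurable g (gibbsMeasure V w) :=
    (continuous_iff_continuousAt.2 fun x => (hg x).continuousAt).aestronglyMeasurable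
  have hgi : Integrable g (gibbsMeasure V w) := .of_bound hgm M <| .of_forall fun x => by
    rw [Real.norm_of_nonneg (hg0 x).le]
    exact hgM x
  set m := ∫ x, g x ∂gibbsMeasure V w
  have hm : 0 < m := (integral_pos_iff_support_of_nonneg (fun x => (hg0 x).le) hgi).2 <| by
    have : Function.support g = univ := eq_univ_of_forall fun x => (hg0 x).ne'
    simp [this]
  have fisher_scale (x : ℝ) : (m⁻¹ * g' x) ^ 2 / (m⁻¹ * g x * w x ^ 2) =
      m⁻¹ * (g' x ^ 2 / (g x * w x ^ 2)) := by
    have := (hg0 x).ne'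
    have := (h.weight_pos x).ne'
    field_simp
  have normalized := h.entropy_le_of_integral_eq_one (g := fun x => m⁻¹ * g x) hρ hw hY
    (fun x => mul_pos (inv_pos.2 hm) (hg0 x))
    (fun x => mul_le_mul_of_nonneg_left (hgM x) (inv_pos.2 hm).le)
    (fun x => (hg x).const_mul m⁻¹)
    (by rw [integral_const_mul, inv_mul_cancel₀ hm.ne'])
    (by simpa only [fisher_scale] using hfisher.const_mul m⁻¹)
  simp only [fisher_scale, integral_const_mul] at normalized
  rw [entropy_const_mul hgi (integrable_mul_log_of_bounded hgm (fun x => (hg0 x).le) hgM),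
    mul_left_comm] at normalized
  exact le_of_mul_le_mul_left normalized (inv_pos.2 hm)

theorem entropy_sq_le (h : IsStronglyConvexAlong ρ V P Y w) (hρ : 0 < ρ)
    (hw : Continuous w) (hY : Bornology.IsBounded (range Y))
    [IsProbabilityMeasure (gibbsMeasure V w)] (hφ : Differentiable ℝ φ) (hφM : ∀ x, |φ x| ≤ M)
    (henergy : Integrable (fun x => deriv φ x ^ 2 / w x ^ 2) (gibbsMeasure V w)) :
    entropy (gibbsMeasure V w) (fun x => φ x ^ 2) ≤
      2 / ρ * ∫ x, deriv φ x ^ 2 / w x ^ 2 ∂gibbsMeasure V w := by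
  have hsqM (x : ℝ) : φ x ^ 2 ≤ M ^ 2 := sq_le_sq' (abs_le.1 (hφM x)).1 (abs_le.1 (hφM x)).2
  refine le_of_tendsto (tendsto_entropy_add_const (hφ.continuous.pow 2).aestronglyMeasurable
    (fun x => sq_nonneg (φ x)) hsqM) ?_
  filter_upwards [self_mem_nhdsWithin] with ε hε
  have hpos (x : ℝ) : 0 < φ x ^ 2 + ε := add_pos_of_nonneg_of_pos (sq_nonneg _) hε
  have fisher_le (x : ℝ) : (2 * φ x * deriv φ x) ^ 2 / ((φ x ^ 2 + ε) * w x ^ 2) ≤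
      4 * (deriv φ x ^ 2 / w x ^ 2) := by
    have hwx := h.weight_pos x
    rw [mul_div_assoc', div_le_div_iff₀ (mul_pos (hpos x) (pow_pos hwx 2)) (pow_pos hwx 2)]
    have : 0 ≤ 4 * ε * deriv φ x ^ 2 * w x ^ 2 := by
      have := (mem_Ioi.1 hε).le
      positivity
    linarith
  have fisher_nonneg (x : ℝ) : 0 ≤ (2 * φ x * deriv φ x) ^ 2 / ((φ x ^ 2 + ε) * w x ^ 2) := by
    have := hpos x
    positivity
  have fisher_integrable : Integrable
      (fun x => (2 * φ x * deriv φ x) ^ 2 / ((φ x ^ 2 + ε) * w x ^ 2)) (gibbsMeasure V w) := by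
    refine (henergy.const_mul 4).mono' (Measurable.aestronglyMeasurable ?_) (.of_forall fun x => ?_)
    · have := hφ.continuous.measurable
      have := measurable_deriv φ
      have := hw.measurable
      fun_prop
    · rw [Real.norm_of_nonneg (fisher_nonneg x)]
      exact fisher_le x
  calc entropy (gibbsMeasure V w) (fun x => φ x ^ 2 + ε)
      ≤ (2 * ρ)⁻¹ * ∫ x, (2 * φ x * deriv φ x) ^ 2 / ((φ x ^ 2 + ε) * w x ^ 2)
          ∂gibbsMeasure V w :=
        h.entropy_le hρ hw hY hpos (fun x => add_le_add_left (hsqM x) ε)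
          (fun x => (((hφ x).hasDerivAt.pow 2).add_const ε).congr_deriv (by push_cast; ring))
          fisher_integrable
    _ ≤ (2 * ρ)⁻¹ * ∫ x, 4 * (deriv φ x ^ 2 / w x ^ 2) ∂gibbsMeasure V w :=
        mul_le_mul_of_nonneg_left (integral_mono fisher_integrable (henergy.const_mul 4) fisher_le)
          (by positivity)
    _ = 2 / ρ * ∫ x, deriv φ x ^ 2 / w x ^ 2 ∂gibbsMeasure V w := by
        rw [integral_const_mul]
        field_simp
        norm_num

end IsStronglyConvexAlong

section CauchyDensity

variable {α β C : ℝ}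

/-- For `α > 1`, the largest `κ` with `κ (1 + s) ^ (2 - α) ≤ 1 + (α - 1) s` for all `s ≥ 0`; the
constant of the theorem is `ρ_{β,α} = (2β - α) κ`. The two sides touch at
`1 + s = ((2 - α) / (α - 1))²` if `α < 3/2` and at `s = 0` otherwise. -/
noncomputable def convexityFactor (α : ℝ) : ℝ :=
  if α < 3 / 2 then ((α - 1) / (2 - α)) ^ (3 - 2 * α) else 1

lemma convexityFactor_pos (hα : 1 < α) : 0 < convexityFactor α := by
  unfold convexityFactor
  split_ifs with h
  · exact Real.rpow_pos_of_pos (div_pos (by linarith) (by linarith)) _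
  · exact one_pos

lemma rpow_mul_one_add_rpow_le {s : ℝ} (hα : 1 < α) (hα' : α < 2) (hs : 0 ≤ s) :
    ((α - 1) / (2 - α)) ^ (3 - 2 * α) * (1 + s) ^ (2 - α) ≤ 1 + (α - 1) * s := by
  have h2 : 0 < 2 - α := by linarith
  set c := (α - 1) / (2 - α) with hc
  have hc0 : 0 < c := div_pos (by linarith) h2
  have bernoulli := rpow_one_add_le_one_add_mul_self (s := c ^ 2 * (1 + s) - 1) (p := 2 - α)
    (by linarith [mul_nonneg (sq_nonneg c) (by linarith : 0 ≤ 1 + s)]) h2.le (by linarith)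
  have sq_rpow : (c ^ 2) ^ (2 - α) = c * c ^ (3 - 2 * α) := by
    rw [← Real.rpow_natCast, ← Real.rpow_mul hc0.le, ← Real.rpow_one_add' hc0.le (by linarith)]
    congr 1
    push_cast
    ring
  refine le_of_mul_le_mul_left ?_ hc0
  calc c * (c ^ (3 - 2 * α) * (1 + s) ^ (2 - α)) = (1 + (c ^ 2 * (1 + s) - 1)) ^ (2 - α) := by
        rw [add_sub_cancel, Real.mul_rpow (sq_nonneg c) (by linarith), sq_rpow, mul_assoc]
    _ ≤ 1 + (2 - α) * (c ^ 2 * (1 + s) - 1) := bernoulli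
    _ = c * (1 + (α - 1) * s) := by
        rw [hc]
        field_simp
        ring

lemma convexityFactor_mul_one_add_rpow_le {s : ℝ} (hα : 1 < α) (hs : 0 ≤ s) :
    convexityFactor α * (1 + s) ^ (2 - α) ≤ 1 + (α - 1) * s := by
  unfold convexityFactor
  split_ifs with h
  · exact rpow_mul_one_add_rpow_le hα (by linarith) hs
  rw [one_mul]
  rcases le_total α 2 with h2 | h2
  · calc (1 + s) ^ (2 - α) ≤ 1 + (2 - α) * s :=
          rpow_one_add_le_one_add_mul_self (by linarith) (by linarith) (by linarith)
      _ ≤ 1 + (α - 1) * s := by gcongr 1 + ?_ * s; linarith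
  · calc (1 + s) ^ (2 - α) ≤ 1 :=
          Real.rpow_le_one_of_one_le_of_nonpos (by linarith) (by linarith)
      _ ≤ 1 + (α - 1) * s := le_add_of_nonneg_right (mul_nonneg (by linarith) hs)

lemma one_add_sq_pos (x : ℝ) : 0 < 1 + x ^ 2 := by positivity

lemma hasDerivAt_one_add_sq (x : ℝ) : HasDerivAt (fun x : ℝ => 1 + x ^ 2) (2 * x) x := by
  simpa using (hasDerivAt_pow 2 x).const_add 1

/-- The derivative `dY/dx` of the coordinate in which the Cauchy-type density is strongly
log-concave. -/
noncomputable def cauchyWeight (α x : ℝ) : ℝ := (1 + x ^ 2) ^ (-α / 2)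

/-- The coordinate `Y` itself, normalized by `Y 0 = 0`; it is bounded exactly when `α > 1`. -/
noncomputable def cauchyCoord (α x : ℝ) : ℝ := ∫ t in (0 : ℝ)..x, cauchyWeight α t

/-- Minus the logarithm of the density of `C (1 + x²)^{-β} dx` with respect to `dY`. -/
noncomputable def cauchyPotential (α β C x : ℝ) : ℝ :=
  (β - α / 2) * Real.log (1 + x ^ 2) - Real.log C

/-- The derivative `dV/dY` of the potential with respect to the coordinate. -/
noncomputable def cauchySlope (α β x : ℝ) : ℝ :=
  (2 * β - α) * (x * (1 + x ^ 2) ^ (α / 2 - 1))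

/-- The measure `C (1 + x²)^{-β} dx`, the law of `X` when `C` is the normalizing constant. -/
noncomputable def cauchyTypeMeasure (β C : ℝ) : Measure ℝ :=
  densityMeasure fun x => C / (1 + x ^ 2) ^ β

lemma cauchyWeight_pos (α x : ℝ) : 0 < cauchyWeight α x :=
  Real.rpow_pos_of_pos (one_add_sq_pos x) _

lemma continuous_cauchyWeight (α : ℝ) : Continuous (cauchyWeight α) :=
  Continuous.rpow_const (by fun_prop) fun x => .inl (one_add_sq_pos x).ne'

lemma integrable_cauchyWeight (hα : 1 < α) : Integrable (cauchyWeight α) := by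
  unfold cauchyWeight
  simpa using
    integrable_rpow_neg_one_add_norm_sq (E := ℝ) (μ := volume) (r := α) (by simpa using hα)

lemma cauchyWeight_sq (α x : ℝ) : cauchyWeight α x ^ 2 = ((1 + x ^ 2) ^ α)⁻¹ := by
  rw [cauchyWeight, ← Real.rpow_mul_natCast (one_add_sq_pos x).le,
    ← Real.rpow_neg (one_add_sq_pos x).le]
  congr 1
  push_cast
  ring

lemma hasDerivAt_cauchyCoord (α x : ℝ) : HasDerivAt (cauchyCoord α) (cauchyWeight α x) x :=
  ((continuous_cauchyWeight α).integral_hasStrictDerivAt 0 x).hasDerivAt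

lemma isBounded_range_cauchyCoord (hα : 1 < α) :
    Bornology.IsBounded (range (cauchyCoord α)) := by
  refine isBounded_iff_forall_norm_le.2 ⟨∫ t, ‖cauchyWeight α t‖, forall_mem_range.2 fun x => ?_⟩
  exact intervalIntegral.norm_integral_le_integral_norm_uIoc.trans
    (setIntegral_le_integral (integrable_cauchyWeight hα).norm (.of_forall fun _ => norm_nonneg _))

lemma hasDerivAt_cauchyPotential (α β C x : ℝ) :
    HasDerivAt (cauchyPotential α β C) (cauchySlope α β x * cauchyWeight α x) x := by
  have slope_mul_weight : cauchySlope α β x * cauchyWeight α x =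
      (2 * β - α) * (x * (1 + x ^ 2)⁻¹) := by
    rw [cauchySlope, cauchyWeight, mul_assoc, mul_assoc x, ← Real.rpow_add (one_add_sq_pos x),
      ← Real.rpow_neg_one]
    ring_nf
  refine ((((hasDerivAt_one_add_sq x).log (one_add_sq_pos x).ne').const_mul
    (β - α / 2)).sub_const (Real.log C)).congr_deriv ?_
  rw [slope_mul_weight]
  ring

lemma hasDerivAt_cauchySlope (α β x : ℝ) :
    HasDerivAt (cauchySlope α β)
      ((2 * β - α) * ((1 + x ^ 2) ^ (α / 2 - 2) * (1 + (α - 1) * x ^ 2))) x := by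
  have hpow := (hasDerivAt_one_add_sq x).rpow_const (p := α / 2 - 1) (.inl (one_add_sq_pos x).ne')
  refine (((hasDerivAt_id' x).mul hpow).const_mul (2 * β - α)).congr_deriv ?_
  have split : (1 + x ^ 2) ^ (α / 2 - 1) = (1 + x ^ 2) ^ (α / 2 - 2) * (1 + x ^ 2) := by
    rw [← Real.rpow_add_one (one_add_sq_pos x).ne']
    ring_nf
  rw [split, show α / 2 - 1 - 1 = α / 2 - 2 by ring]
  ring

theorem isStronglyConvexAlong_cauchy (hα : 1 < α) (hαβ : α ≤ 2 * β) (C : ℝ) :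
    IsStronglyConvexAlong ((2 * β - α) * convexityFactor α) (cauchyPotential α β C)
      (cauchySlope α β) (cauchyCoord α) (cauchyWeight α) where
  hasDerivAt_coord := hasDerivAt_cauchyCoord α
  weight_pos := cauchyWeight_pos α
  hasDerivAt_potential := hasDerivAt_cauchyPotential α β C
  monotone_slope_sub := by
    refine monotone_of_hasDerivAt_nonneg (fun x => (hasDerivAt_cauchySlope α β x).sub
      ((hasDerivAt_cauchyCoord α x).const_mul _)) fun x => sub_nonneg.2 ?_
    have weight_eq : cauchyWeight α x = (1 + x ^ 2) ^ (α / 2 - 2) * (1 + x ^ 2) ^ (2 - α) := by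
      rw [cauchyWeight, ← Real.rpow_add (one_add_sq_pos x)]
      ring_nf
    rw [weight_eq, mul_assoc, mul_left_comm (convexityFactor α)]
    exact mul_le_mul_of_nonneg_left (mul_le_mul_of_nonneg_left
      (convexityFactor_mul_one_add_rpow_le hα (sq_nonneg x))
      (Real.rpow_pos_of_pos (one_add_sq_pos x) _).le) (sub_nonneg.2 hαβ)

lemma gibbsMeasure_cauchy (hC : 0 < C) (α β : ℝ) :
    gibbsMeasure (cauchyPotential α β C) (cauchyWeight α) = cauchyTypeMeasure β C := by
  have density_eq (x : ℝ) : Real.exp (-cauchyPotential α β C x) * cauchyWeight α x =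
      C / (1 + x ^ 2) ^ β := by
    have hx := one_add_sq_pos x
    rw [cauchyPotential, cauchyWeight, neg_sub, Real.exp_sub, Real.exp_log hC, mul_comm (β - _),
      ← Real.rpow_def_of_pos hx, div_mul_eq_mul_div, mul_div_assoc, ← Real.rpow_sub hx,
      div_eq_mul_inv C, ← Real.rpow_neg hx.le]
    ring_nf
  simp only [gibbsMeasure, cauchyTypeMeasure, density_eq]

lemma cauchyDensity_nonneg (hC : 0 ≤ C) (β x : ℝ) : 0 ≤ C / (1 + x ^ 2) ^ β :=
  div_nonneg hC (Real.rpow_pos_of_pos (one_add_sq_pos x) _).le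

lemma integral_cauchyTypeMeasure (hC : 0 ≤ C) (β : ℝ) (g : ℝ → ℝ) :
    ∫ x, g x ∂cauchyTypeMeasure β C = ∫ x, g x * (C / (1 + x ^ 2) ^ β) :=
  integral_densityMeasure (by fun_prop) (cauchyDensity_nonneg hC β) g

lemma integrable_cauchyTypeMeasure (hC : 0 ≤ C) (β : ℝ) {g : ℝ → ℝ} :
    Integrable g (cauchyTypeMeasure β C) ↔ Integrable fun x => g x * (C / (1 + x ^ 2) ^ β) :=
  integrable_densityMeasure (by fun_prop) (cauchyDensity_nonneg hC β)

theorem entropy_sq_le_cauchyTypeMeasure {M : ℝ} {φ : ℝ → ℝ} (hα : 1 < α) (hαβ : α < 2 * β)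
    (hC : 0 < C) [IsProbabilityMeasure (cauchyTypeMeasure β C)] (hφ : Differentiable ℝ φ)
    (hφM : ∀ x, |φ x| ≤ M)
    (henergy : Integrable (fun x => (1 + x ^ 2) ^ α * deriv φ x ^ 2) (cauchyTypeMeasure β C)) :
    entropy (cauchyTypeMeasure β C) (fun x => φ x ^ 2) ≤
      2 / ((2 * β - α) * convexityFactor α) *
        ∫ x, (1 + x ^ 2) ^ α * deriv φ x ^ 2 ∂cauchyTypeMeasure β C := by
  have energy_eq (x : ℝ) : (1 + x ^ 2) ^ α * deriv φ x ^ 2 =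
      deriv φ x ^ 2 / cauchyWeight α x ^ 2 := by
    rw [cauchyWeight_sq, div_inv_eq_mul, mul_comm]
  simp only [energy_eq, ← gibbsMeasure_cauchy hC α β] at *
  exact (isStronglyConvexAlong_cauchy hα hαβ.le C).entropy_sq_le
    (mul_pos (sub_pos.2 hαβ) (convexityFactor_pos hα)) (continuous_cauchyWeight α)
    (isBounded_range_cauchyCoord hα) hφ hφM henergy

end CauchyDensity

theorem log_sobolev_cauchy_type_general
    (β α : ℝ) (hα : 1 < α) (hαβ : α < 2 * β)
    (C : ℝ) (hC : 0 < C)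
    (hnorm : ∫ x : ℝ, C / (1 + x ^ 2) ^ β = 1)
    (φ : ℝ → ℝ) (hφ : Differentiable ℝ φ) (hbdd : ∃ M, ∀ x, |φ x| ≤ M)
    (hrhs : Integrable (fun x => (1 + x ^ 2) ^ α * (deriv φ x) ^ 2 * (C / (1 + x ^ 2) ^ β))) :
    (∫ x : ℝ, φ x ^ 2 * Real.log (φ x ^ 2) * (C / (1 + x ^ 2) ^ β))
        - (∫ x : ℝ, φ x ^ 2 * (C / (1 + x ^ 2) ^ β)) *
            Real.log (∫ x : ℝ, φ x ^ 2 * (C / (1 + x ^ 2) ^ β))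
      ≤ (2 / (if α < 3 / 2 then (2 * β - α) * ((α - 1) / (2 - α)) ^ (3 - 2 * α)
            else 2 * β - α)) *
          ∫ x : ℝ, (1 + x ^ 2) ^ α * (deriv φ x) ^ 2 * (C / (1 + x ^ 2) ^ β) := by
  obtain ⟨M, hM⟩ := hbdd
  have : IsProbabilityMeasure (cauchyTypeMeasure β C) :=
    isProbabilityMeasure_densityMeasure (cauchyDensity_nonneg hC.le β) hnorm
  have main := entropy_sq_le_cauchyTypeMeasure hα hαβ hC hφ hM
    ((integrable_cauchyTypeMeasure hC.le β).2 hrhs)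
  simpa only [entropy, integral_cauchyTypeMeasure hC.le, convexityFactor, mul_ite, mul_one]
    using main

/-- **Weighted logarithmic Sobolev inequality for Cauchy-type densities**
(Theorem 3.1). Let `β > 1` and let `X` have the Cauchy-type density
`f_β(x) = C_β/(1+x²)^β` on `ℝ`. For every `α` with `1 < α < β` and every bounded
smooth `φ` with `Ent[φ²(X)]` finite,
`Ent[φ²(X)] ≤ (2/ρ_{β,α}) E[(1+X²)^α (φ'(X))²]`, where
`ρ_{β,α} = (2β−α)((α−1)/(2−α))^{3−2α}` for `1 < α < 3/2` and `ρ_{β,α} = 2β−α` for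
`3/2 ≤ α < β` (whenever the right-hand side is finite). Here
`Ent[φ²(X)] = ∫ φ² log φ² f − (∫ φ² f) log (∫ φ² f)`. -/
theorem log_sobolev_cauchy_type
    (β α : ℝ) (hβ : 1 < β) (hα : 1 < α) (hαβ : α < β)
    (C : ℝ) (hC : 0 < C)
    (hnorm : ∫ x : ℝ, C / (1 + x ^ 2) ^ β = 1)
    (φ : ℝ → ℝ) (hφ : ContDiff ℝ (⊤ : ℕ∞) φ) (hbdd : ∃ M, ∀ x, |φ x| ≤ M)
    (hint : Integrable (fun x => φ x ^ 2 * (C / (1 + x ^ 2) ^ β)))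
    (hent : Integrable (fun x => φ x ^ 2 * Real.log (φ x ^ 2) * (C / (1 + x ^ 2) ^ β)))
    (hrhs : Integrable (fun x => (1 + x ^ 2) ^ α * (deriv φ x) ^ 2 * (C / (1 + x ^ 2) ^ β))) :
    (∫ x : ℝ, φ x ^ 2 * Real.log (φ x ^ 2) * (C / (1 + x ^ 2) ^ β))
        - (∫ x : ℝ, φ x ^ 2 * (C / (1 + x ^ 2) ^ β)) *
            Real.log (∫ x : ℝ, φ x ^ 2 * (C / (1 + x ^ 2) ^ β))
      ≤ (2 / (if α < 3 / 2 then (2 * β - α) * ((α - 1) / (2 - α)) ^ (3 - 2 * α)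
            else 2 * β - α)) *
          ∫ x : ℝ, (1 + x ^ 2) ^ α * (deriv φ x) ^ 2 * (C / (1 + x ^ 2) ^ β) := by
  exact log_sobolev_cauchy_type_general β α hα (by linarith) C hC hnorm φ
    (hφ.differentiable (by simp)) hbdd hrhs
end
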